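/- Let F/K be a finite unramified extension of p-adic fields and L/K a finite Galois extension. Then m_{LF/F} = m_{L/K}, where m_{E/E'} denotes the largest upper-numbering jump of the ramification filtration of Gal(E/E'). In particular, if L/K is abelian then the conductor exponents satisfy f(LF/F) = f(L/K). -/

import Mathlib

universe v

/-- An (additive) normalized discrete valuation on `K`. -/
def IsNormalizedVal (p : ℕ) (K : Type*) [Field K] (v : K → ℤ) : Prop :=
  (∀ x y : K, x ≠ 0 → y ≠ 0 → v (x * y) = v x + v y) ∧
  (∀ x y : K, x ≠ 0 → y ≠ 0 → x + y ≠ 0 → min (v x) (v y) ≤ v (x + y)) ∧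
  (∃ π : K, π ≠ 0 ∧ v π = 1) ∧
  (0 < v ((p : K)))

/-- The abelian conductor exponent of `L/K`, defined via norm groups. -/
noncomputable def condExp {K : Type*} [Field K] (vK : K → ℤ)
    (L : Type v) [Field L] [Algebra K L] : ℕ :=
  sInf {n : ℕ | ∀ u : K, u ≠ 0 → vK u = 0 →
    (n = 0 ∨ u = 1 ∨ (n : ℤ) ≤ vK (u - 1)) →
      ∃ x : L, x ≠ 0 ∧ Algebra.norm K x = u}

open scoped Classical in
/-- The largest upper-numbering ramification jump `m_{L/K} = φ_{L/K}(c_{L/K})` of a finite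
Galois extension `L/K`, computed via the index function `i_{L/K}(g) = ord_{π_L}(gθ − θ)`
for a generator `θ` of `O_L` over `O_K`, using the explicit formula
`φ(u) = (1/|G₀|)·∑_{g ∈ G₀} min(i(g), u+1) − 1` for the Herbrand function
(by convention `m_{L/K} = −1` when `L/K` is unramified). -/
noncomputable def mJump (K : Type*) {L : Type*} [Field K] [Field L] [Algebra K L]
    [FiniteDimensional K L] (vL : L → ℤ) (θ : L) : ℝ :=
  let i : (L ≃ₐ[K] L) → ℕ := fun g => (vL (g θ - θ)).toNat
  let c : ℕ := (Finset.univ.filter (fun g : L ≃ₐ[K] L => g ≠ 1)).sup i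
  let G₀ : Finset (L ≃ₐ[K] L) :=
    Finset.univ.filter (fun g => g = 1 ∨ (g θ - θ ≠ 0 ∧ 1 ≤ vL (g θ - θ)))
  ((c : ℝ) + ∑ g ∈ G₀.filter (fun g => g ≠ 1), (min (i g) c : ℝ)) / (G₀.card : ℝ) - 1

/-!
Write `M = L F`. Restriction `Gal(M / F) → Gal(L / K)` is injective and identifies the inertia
groups, because a uniformizer of `L` is still one of `M`. For `g` in the inertia group, the index
`i(g)` is the least valuation of `g x - x` over the integers `x`; it does not depend on the
generator and is already attained at a uniformizer. Hence the indices, and with them the jumps,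
agree.

For the conductors, the norm of the unramified extension `F / K` maps the `n`-th unit group of `F`
onto that of `K`, so it suffices that a unit of `F` is the norm of a unit of `M` if and only if its
norm to `K` is the norm of a unit of `L`. If `L / K` is cyclic, the unit norm groups of `L / K` and
`M / F` both have index the ramification index `e`: the Herbrand quotient of the units is trivial,
since the exponential of a small lattice spanned by a normal basis has finite index in them.
If `L / K` is abelian and totally ramified, one climbs along cyclic steps, correcting by Hilbert 90.
The general abelian case reduces to this one: adjoining roots of unity of order prime to `p` to `L`
does not change the unit norm group and provides a complement of the inertia group.
-/

namespace UnramifiedBaseChange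

open IsLocalRing
open scoped NNReal

section AbsoluteValue

variable (p : ℕ) [Fact p.Prime] (E : Type*) [Field E] [Algebra ℚ_[p] E]
  [Algebra.IsAlgebraic ℚ_[p] E]

/-- The unique extension of the `p`-adic absolute value to an algebraic extension `E` of `ℚ_p`.
It makes the absolute values of all the fields of a tower comparable inside `ℝ≥0`. -/
noncomputable def absVal : Valuation E ℝ≥0 where
  toFun x := ⟨spectralNorm ℚ_[p] E x, spectralNorm_nonneg x⟩
  map_zero' := NNReal.eq spectralNorm_zero
  map_one' := NNReal.eq spectralNorm_one
  map_mul' x y := NNReal.eq (map_mul (spectralMulAlgNorm ℚ_[p] E) x y)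
  map_add_le_max' x y := isNonarchimedean_spectralNorm x y

/-- The ring of integers of `E`. -/
noncomputable abbrev integers : ValuationSubring E := (absVal p E).valuationSubring

variable {E}

theorem absVal_algebraMap_padic (x : ℚ_[p]) : absVal p E (algebraMap ℚ_[p] E x) = ‖x‖₊ :=
  NNReal.eq (spectralNorm_extends x)

theorem absVal_prime_lt_one : absVal p E p < 1 := by
  rw [← map_natCast (algebraMap ℚ_[p] E), absVal_algebraMap_padic]
  exact Padic.norm_p_lt_one

theorem absVal_natCast_ne_zero {n : ℕ} (hn : n ≠ 0) : absVal p E n ≠ 0 := by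
  have : CharZero E := charZero_of_injective_algebraMap (algebraMap ℚ_[p] E).injective
  exact (absVal p E).ne_zero_iff.2 (Nat.cast_ne_zero.2 hn)

theorem absVal_algHom {E' : Type*} [Field E'] [Algebra ℚ_[p] E'] [Algebra.IsAlgebraic ℚ_[p] E']
    (σ : E →ₐ[ℚ_[p]] E') (x : E) : absVal p E' (σ x) = absVal p E x :=
  NNReal.eq (congrArg spectralValue (minpoly.algHom_eq σ σ.injective x))

theorem absVal_algEquiv {k : Type*} [Field k] [Algebra ℚ_[p] k] [Algebra k E]
    [IsScalarTower ℚ_[p] k E] (g : E ≃ₐ[k] E) (x : E) : absVal p E (g x) = absVal p E x :=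
  absVal_algHom p (g.toAlgHom.restrictScalars ℚ_[p]) x

theorem absVal_algebraMap {E' : Type*} [Field E'] [Algebra ℚ_[p] E'] [Algebra.IsAlgebraic ℚ_[p] E']
    [Algebra E E'] [IsScalarTower ℚ_[p] E E'] (x : E) :
    absVal p E' (algebraMap E E' x) = absVal p E x :=
  absVal_algHom p (IsScalarTower.toAlgHom ℚ_[p] E E') x

theorem absVal_norm (k : Type*) [Field k] [Algebra ℚ_[p] k] [Algebra.IsAlgebraic ℚ_[p] k]
    [Algebra k E] [IsScalarTower ℚ_[p] k E] [FiniteDimensional k E] (x : E) :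
    absVal p k (Algebra.norm k x) = absVal p E x ^ Module.finrank k E := by
  have : CharZero k := charZero_of_injective_algebraMap (algebraMap ℚ_[p] k).injective
  have : Algebra.IsAlgebraic ℚ_[p] (AlgebraicClosure k) := .trans ℚ_[p] k _
  have absVal_embedding (σ : E →ₐ[k] AlgebraicClosure k) :
      absVal p (AlgebraicClosure k) (σ x) = absVal p E x :=
    absVal_algHom p (σ.restrictScalars ℚ_[p]) x
  rw [← absVal_algebraMap p (E' := AlgebraicClosure k), Algebra.norm_eq_prod_embeddings, map_prod,
    Finset.prod_congr rfl fun σ _ ↦ absVal_embedding σ, Finset.prod_const, Finset.card_univ,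
    AlgHom.card]

theorem absVal_add_pow_sub_sub_le {x d : E} (hx : absVal p E x ≤ 1) (hd : absVal p E d ≤ 1)
    (n : ℕ) : absVal p E ((x + d) ^ n - x ^ n - n * x ^ (n - 1) * d) ≤ absVal p E d ^ 2 := by
  obtain ⟨k, hk⟩ := Polynomial.powAddExpansion (⟨x, hx⟩ : integers p E) ⟨d, hd⟩ n
  have expansion : (x + d) ^ n - x ^ n - n * x ^ (n - 1) * d = k * d ^ 2 := by
    have := congrArg (Subtype.val : integers p E → E) hk
    push_cast at this
    rw [this]; ring
  rw [expansion, map_mul, map_pow]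
  exact mul_le_of_le_one_left' k.2

theorem absVal_add_pow_sub_pow_le {x d : E} (hx : absVal p E x ≤ 1) (hd : absVal p E d ≤ 1)
    (n : ℕ) : absVal p E ((x + d) ^ n - x ^ n) ≤
      max (absVal p E n * absVal p E d) (absVal p E d ^ 2) := by
  rw [← sub_add_cancel ((x + d) ^ n - x ^ n) (n * x ^ (n - 1) * d), add_comm]
  refine ((absVal p E).map_add _ _).trans
    (max_le_max ?_ (absVal_add_pow_sub_sub_le p hx hd n))
  rw [mul_right_comm, map_mul, map_mul, map_pow]
  exact mul_le_of_le_one_right' (pow_le_one' hx _)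

end AbsoluteValue

section Discrete

variable (p : ℕ) [Fact p.Prime] (E : Type*) [Field E] [Algebra ℚ_[p] E]
  [FiniteDimensional ℚ_[p] E]

open Valued.integer in
open scoped Valued NormedField in
theorem isDiscreteValuationRing_integers_and_finite_residueField :
    IsDiscreteValuationRing (integers p E) ∧ Finite (ResidueField (integers p E)) := by
  let _ := spectralNorm.nontriviallyNormedField ℚ_[p] E
  let _ : NormedSpace ℚ_[p] E := spectralNorm.normedSpace ℚ_[p] E
  have : ProperSpace E := FiniteDimensional.proper ℚ_[p] E
  have : IsUltrametricDist E :=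
    IsUltrametricDist.isUltrametricDist_of_isNonarchimedean_norm isNonarchimedean_spectralNorm
  have compact : CompactSpace 𝒪[E] := by
    refine isCompact_iff_compactSpace.1 ?_
    convert isCompact_closedBall (0 : E) 1 using 1
    ext x
    rw [mem_closedBall_zero_iff]
    rfl
  exact ((@compactSpace_iff_completeSpace_and_isDiscreteValuationRing_and_finite_residueField
    E ℝ≥0 _ _ _ (inferInstanceAs (NormedField.valuation (K := E)).RankOne)).1 compact).2

instance : IsDiscreteValuationRing (integers p E) :=
  (isDiscreteValuationRing_integers_and_finite_residueField p E).1

instance : Finite (ResidueField (integers p E)) :=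
  (isDiscreteValuationRing_integers_and_finite_residueField p E).2

/-- A chosen uniformizer of `E`. -/
noncomputable def uniformizer : integers p E :=
  (IsDiscreteValuationRing.exists_irreducible (integers p E)).choose

theorem irreducible_uniformizer : Irreducible (uniformizer p E) :=
  (IsDiscreteValuationRing.exists_irreducible (integers p E)).choose_spec

/-- The absolute value of a uniformizer of `E`, i.e. the generator in `(0, 1)` of the value group.
For a finite extension `L / K`, the ramification index is the `e` with
`unifAbs p K = unifAbs p L ^ e`. -/
noncomputable def unifAbs : ℝ≥0 := absVal p E (uniformizer p E)

theorem unifAbs_pos : 0 < unifAbs p E :=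
  (Valuation.valuationSubring.integers _).valuation_irreducible_pos (irreducible_uniformizer p E)

theorem unifAbs_lt_one : unifAbs p E < 1 :=
  (Valuation.valuationSubring.integers _).valuation_irreducible_lt_one
    (irreducible_uniformizer p E)

variable {E}

theorem absVal_le_one_iff_exists_eq_pow {x : E} (hx : x ≠ 0) :
    absVal p E x ≤ 1 ↔ ∃ n : ℕ, absVal p E x = unifAbs p E ^ n := by
  refine ⟨fun h ↦ ?_, fun ⟨n, hn⟩ ↦ hn ▸ pow_le_one₀ zero_le (unifAbs_lt_one p E).le⟩
  have hx' : (⟨x, h⟩ : integers p E) ≠ 0 := fun h0 ↦ hx (congrArg Subtype.val h0)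
  obtain ⟨n, u, hu⟩ := IsDiscreteValuationRing.associated_pow_irreducible hx'
    (irreducible_uniformizer p E)
  refine ⟨n, ?_⟩
  have := congrArg (fun y : integers p E ↦ absVal p E y) hu
  have hu1 := (Valuation.valuationSubring.integers (absVal p E)).valuation_unit u
  simpa [unifAbs, show absVal p E (u : integers p E) = 1 from hu1] using this

theorem exists_absVal_eq_zpow {x : E} (hx : x ≠ 0) :
    ∃ k : ℤ, absVal p E x = unifAbs p E ^ k := by
  rcases (absVal p E).val_le_one_or_val_inv_le_one x with h | h
  · obtain ⟨n, hn⟩ := (absVal_le_one_iff_exists_eq_pow p hx).1 h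
    exact ⟨n, by rw [hn, zpow_natCast]⟩
  · obtain ⟨n, hn⟩ := (absVal_le_one_iff_exists_eq_pow p (inv_ne_zero hx)).1 h
    exact ⟨-n, by rw [zpow_neg, zpow_natCast, ← hn, map_inv₀, inv_inv]⟩

theorem unifAbs_zpow_le_iff {m n : ℤ} : unifAbs p E ^ m ≤ unifAbs p E ^ n ↔ n ≤ m :=
  zpow_le_zpow_iff_right_of_lt_one₀ (unifAbs_pos p E) (unifAbs_lt_one p E)

theorem unifAbs_zpow_injective : Function.Injective (unifAbs p E ^ · : ℤ → ℝ≥0) :=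
  zpow_right_injective₀ (unifAbs_pos p E) (unifAbs_lt_one p E).ne

theorem absVal_lt_one_iff_le_unifAbs {x : E} :
    absVal p E x < 1 ↔ absVal p E x ≤ unifAbs p E := by
  refine ⟨fun h ↦ ?_, fun h ↦ h.trans_lt (unifAbs_lt_one p E)⟩
  rcases eq_or_ne x 0 with rfl | hx
  · simp
  obtain ⟨n, hn⟩ := (absVal_le_one_iff_exists_eq_pow p hx).1 h.le
  rw [hn] at h ⊢
  exact pow_le_of_le_one zero_le (unifAbs_lt_one p E).le (by rintro rfl; simp at h)

theorem mem_maximalIdeal_pow_iff {x : integers p E} {n : ℕ} :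
    x ∈ maximalIdeal (integers p E) ^ n ↔ absVal p E x ≤ unifAbs p E ^ n := by
  rw [(irreducible_uniformizer p E).maximalIdeal_eq, Ideal.span_singleton_pow,
    Ideal.mem_span_singleton, (Valuation.valuationSubring.integers (absVal p E)).dvd_iff_le]
  simp [unifAbs, ValuationSubring.algebraMap_apply]

theorem absVal_pow_card_residueField_sub_lt_one {x : E} (hx : absVal p E x ≤ 1) :
    absVal p E (x ^ Nat.card (ResidueField (integers p E)) - x) < 1 := by
  let y : integers p E := ⟨x, hx⟩
  have residue_eq : residue _ (y ^ Nat.card (ResidueField (integers p E)))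
      = residue _ y := by
    let _ := Fintype.ofFinite (ResidueField (integers p E))
    rw [map_pow, Nat.card_eq_fintype_card, FiniteField.pow_card]
  rw [← sub_eq_zero, ← map_sub, residue_eq_zero_iff,
    (absVal p E).mem_maximalIdeal_iff] at residue_eq
  exact_mod_cast residue_eq

end Discrete

section Units

variable (p : ℕ) [Fact p.Prime] (E : Type*) [Field E] [Algebra ℚ_[p] E]
  [FiniteDimensional ℚ_[p] E]

/-- The filtration `U ^ 0 ⊇ U ^ 1 ⊇ …` of the unit group of the ring of integers of `E`, as
subgroups of `Eˣ`: `U ^ 0` consists of all units and `U ^ n` of those congruent to `1` modulo the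
`n`-th power of the maximal ideal. -/
noncomputable def unitFiltration (n : ℕ) : Subgroup Eˣ where
  carrier := {u | absVal p E u = 1 ∧ absVal p E (u - 1) ≤ unifAbs p E ^ n}
  one_mem' := by simp
  mul_mem' := by
    rintro u w ⟨hu, hu'⟩ ⟨hw, hw'⟩
    refine ⟨by simp [hu, hw], ?_⟩
    have split : ((u * w : Eˣ) : E) - 1 = (u - 1) * w + (w - 1) := by push_cast; ring
    rw [split]
    exact (absVal p E).map_add_le (by rwa [map_mul, hw, mul_one]) hw'
  inv_mem' := by
    rintro u ⟨hu, hu'⟩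
    have split : ((u⁻¹ : Eˣ) : E) - 1 = -((u - 1) * (u⁻¹ : Eˣ)) := by
      rw [sub_mul, one_mul, Units.mul_inv, neg_sub]
    have hinv : absVal p E (u⁻¹ : Eˣ) = 1 := by simp [hu]
    exact ⟨hinv, by rwa [split, Valuation.map_neg, map_mul, hinv, mul_one]⟩

variable {E}

theorem mem_unitFiltration {n : ℕ} {u : Eˣ} : u ∈ unitFiltration p E n ↔
    absVal p E u = 1 ∧ absVal p E (u - 1) ≤ unifAbs p E ^ n := Iff.rfl

theorem mem_unitFiltration_zero {u : Eˣ} : u ∈ unitFiltration p E 0 ↔ absVal p E u = 1 :=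
  ⟨And.left, fun h ↦ ⟨h, by
    simpa using (absVal p E).map_sub_le h.le (map_one (absVal p E)).le⟩⟩

theorem mem_unitFiltration_of_ne_zero {n : ℕ} (hn : n ≠ 0) {u : Eˣ} :
    u ∈ unitFiltration p E n ↔ absVal p E (u - 1) ≤ unifAbs p E ^ n := by
  refine ⟨And.right, fun h ↦ ⟨?_, h⟩⟩
  simpa using (absVal p E).map_one_add_of_lt
    (h.trans_lt (pow_lt_one₀ zero_le (unifAbs_lt_one p E) hn))

variable (E) in
theorem unitFiltration_antitone : Antitone (unitFiltration p E) := fun _ _ hmn _ hu ↦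
  ⟨hu.1, hu.2.trans (pow_le_pow_of_le_one zero_le (unifAbs_lt_one p E).le hmn)⟩

theorem exists_unifAbs_pow_lt {ε : ℝ≥0} (hε : 0 < ε) : ∃ n : ℕ, unifAbs p E ^ n < ε :=
  exists_pow_lt_of_lt_one hε (unifAbs_lt_one p E)

theorem exists_unitFiltration_le_map_pow {d : ℕ} (hd : d ≠ 0) (m : ℕ) :
    ∃ n, unitFiltration p E n ≤ (unitFiltration p E m).map (powMonoidHom d) := by
  let _ := spectralNorm.nontriviallyNormedField ℚ_[p] E
  have := spectralNorm.completeSpace ℚ_[p] E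
  have : CharZero E := charZero_of_injective_algebraMap (algebraMap ℚ_[p] E).injective
  have map_nhds : Filter.map (· ^ d) (nhds (1 : E)) = nhds (1 ^ d) :=
    (hasStrictDerivAt_pow d (1 : E)).map_nhds_eq (by simpa using hd)
  have image_mem := Filter.image_mem_map (m := (· ^ d)) (Metric.closedBall_mem_nhds (1 : E)
    (NNReal.coe_pos.2 (pow_pos (unifAbs_pos p E) (m + 1))))
  rw [map_nhds, one_pow] at image_mem
  obtain ⟨ε, hε, ball_subset⟩ := Metric.mem_nhds_iff.1 image_mem
  obtain ⟨n, hn⟩ := exists_unifAbs_pow_lt p (E := E) (ε := ⟨ε, hε.le⟩) hε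
  refine ⟨n, fun u hu ↦ ?_⟩
  obtain ⟨w, hw, hwu⟩ := ball_subset (mem_ball_iff_norm.2 (hu.2.trans_lt hn))
  have hw0 : w ≠ 0 := by rintro rfl; exact u.ne_zero (by simp [← hwu, hd])
  refine ⟨Units.mk0 w hw0, unitFiltration_antitone p E m.le_succ ?_, Units.ext hwu⟩
  exact (mem_unitFiltration_of_ne_zero p m.succ_ne_zero).2 (mem_closedBall_iff_norm.1 hw)

theorem pow_prime_mem_unitFiltration {n : ℕ} (hn : n ≠ 0) {u : Eˣ}
    (hu : u ∈ unitFiltration p E n) : u ^ p ∈ unitFiltration p E (n + 1) := by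
  refine (mem_unitFiltration_of_ne_zero p n.succ_ne_zero).2 ?_
  have hle : absVal p E (u - 1) ≤ unifAbs p E ^ 1 :=
    (unitFiltration_antitone p E (Nat.one_le_iff_ne_zero.2 hn) hu).2
  have hprime : absVal p E p ≤ unifAbs p E :=
    (absVal_lt_one_iff_le_unifAbs p).1 (absVal_prime_lt_one p)
  rw [pow_one] at hle
  have := absVal_add_pow_sub_pow_le p (map_one (absVal p E)).le
    (hle.trans (unifAbs_lt_one p E).le) p
  rw [add_sub_cancel, one_pow] at this
  rw [Units.val_pow_eq_pow_val]
  refine this.trans (max_le ?_ ?_)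
  · rw [pow_succ']
    exact mul_le_mul' hprime hu.2
  · rw [sq, pow_succ]
    exact mul_le_mul' hu.2 hle

theorem pow_prime_pow_mem_unitFiltration {u : Eˣ} (hu : u ∈ unitFiltration p E 1) (j : ℕ) :
    u ^ p ^ j ∈ unitFiltration p E (j + 1) := by
  induction j with
  | zero => simpa using hu
  | succ j ih =>
    rw [pow_succ, pow_mul]
    exact pow_prime_mem_unitFiltration p j.succ_ne_zero ih

variable (E) in
theorem relIndex_unitFiltration_ne_zero (n : ℕ) :
    (unitFiltration p E n).relIndex (unitFiltration p E 0) ≠ 0 := by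
  have : Finite (integers p E ⧸ maximalIdeal (integers p E)) :=
    inferInstanceAs (Finite (ResidueField (integers p E)))
  have := Ideal.finite_quotient_pow
    (IsNoetherian.noetherian (maximalIdeal (integers p E))) n
  let reduction (u : unitFiltration p E 0) :
      integers p E ⧸ maximalIdeal (integers p E) ^ n :=
    Ideal.Quotient.mk _ ⟨(u : Eˣ), u.2.1.le⟩
  have mem_of_eq {u w : unitFiltration p E 0} (h : reduction u = reduction w) :
      (u⁻¹ * w : Eˣ) ∈ unitFiltration p E n := by
    rw [Ideal.Quotient.mk_eq_mk_iff_sub_mem, mem_maximalIdeal_pow_iff] at h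
    refine ⟨(mul_mem (inv_mem u.2) w.2).1, ?_⟩
    have split : ((u⁻¹ * w : Eˣ) : E) - 1 = (u⁻¹ : Eˣ) * ((w : Eˣ) - (u : Eˣ) : E) := by
      push_cast; rw [mul_sub, inv_mul_cancel₀ (Units.ne_zero _)]
    rw [split, map_mul, (inv_mem u.2).1, one_mul, Valuation.map_sub_swap]
    exact h
  have : Finite (unitFiltration p E 0 ⧸
      (unitFiltration p E n).subgroupOf (unitFiltration p E 0)) :=
    Finite.of_injective (fun q ↦ reduction q.out) fun q q' h ↦ by
      rw [← q.out_eq', ← q'.out_eq']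
      exact QuotientGroup.eq.2 (Subgroup.mem_subgroupOf.2 (mem_of_eq h))
  exact Subgroup.index_ne_zero_of_finite

end Units

section NormalizedValuation

section

variable {p : ℕ} {E : Type*} [Field E] {v : E → ℤ}

theorem normalizedVal_zpow (hv : IsNormalizedVal p E v) (u : Eˣ) (n : ℤ) :
    v (u ^ n : Eˣ) = n * v u := by
  let valHom : Eˣ →* Multiplicative ℤ := MonoidHom.mk' (fun u ↦ .ofAdd (v u)) fun u w ↦ by
    rw [Units.val_mul, hv.1 _ _ u.ne_zero w.ne_zero, ofAdd_add]
  have := congrArg Multiplicative.toAdd (map_zpow valHom u n)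
  rwa [toAdd_zpow, smul_eq_mul] at this

theorem normalizedVal_pow (hv : IsNormalizedVal p E v) (u : Eˣ) (n : ℕ) :
    v (u ^ n : Eˣ) = n * v u := by
  exact_mod_cast normalizedVal_zpow hv u n

end

variable (p : ℕ) [Fact p.Prime] {E : Type*} [Field E] [Algebra ℚ_[p] E]
  [FiniteDimensional ℚ_[p] E]

variable (E) in
/-- The normalized discrete valuation of `E` on `Eˣ`, written multiplicatively. -/
noncomputable def ord : Eˣ →* Multiplicative ℤ :=
  MonoidHom.mk' (fun u ↦ .ofAdd (exists_absVal_eq_zpow p u.ne_zero).choose) fun u w ↦ by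
    refine Multiplicative.toAdd.injective (unifAbs_zpow_injective p (E := E) ?_)
    beta_reduce
    rw [toAdd_mul, zpow_add₀ (unifAbs_pos p E).ne', toAdd_ofAdd, toAdd_ofAdd, toAdd_ofAdd,
      ← (exists_absVal_eq_zpow p u.ne_zero).choose_spec,
      ← (exists_absVal_eq_zpow p w.ne_zero).choose_spec,
      ← (exists_absVal_eq_zpow p (u * w).ne_zero).choose_spec, Units.val_mul, map_mul]

theorem absVal_eq_unifAbs_zpow_ord (u : Eˣ) :
    absVal p E u = unifAbs p E ^ (ord p E u).toAdd :=
  (exists_absVal_eq_zpow p u.ne_zero).choose_spec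

theorem ord_eq_ofAdd_iff {u : Eˣ} {k : ℤ} :
    ord p E u = .ofAdd k ↔ absVal p E u = unifAbs p E ^ k := by
  rw [absVal_eq_unifAbs_zpow_ord, (unifAbs_zpow_injective p).eq_iff,
    ← Multiplicative.toAdd.apply_eq_iff_eq, toAdd_ofAdd]

variable (E) in
theorem ker_ord : (ord p E).ker = unitFiltration p E 0 := by
  ext u
  rw [MonoidHom.mem_ker, mem_unitFiltration_zero, ← ofAdd_zero, ord_eq_ofAdd_iff, zpow_zero]

variable (E) in
theorem ord_surjective : Function.Surjective (ord p E) := fun k ↦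
  ⟨Units.mk0 (uniformizer p E : E) ((absVal p E).ne_zero_iff.1 (unifAbs_pos p E).ne') ^ k.toAdd, by
    rw [← ofAdd_toAdd k, ord_eq_ofAdd_iff, Units.val_zpow_eq_zpow_val, map_zpow₀]; rfl⟩

variable {p} {v : E → ℤ}

/-- A high `p`-power of `u` is an `m`-th power, so `v u` is divisible by every `m` prime to `p`. -/
theorem normalizedVal_eq_zero_of_mem_unitFiltration_one (hv : IsNormalizedVal p E v) {u : Eˣ}
    (hu : u ∈ unitFiltration p E 1) : v u = 0 := by
  let m := p * (v u).natAbs + 1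
  obtain ⟨n, hn⟩ := exists_unitFiltration_le_map_pow p (E := E) (d := m) (Nat.succ_ne_zero _) 0
  obtain ⟨w, -, hw⟩ := hn (unitFiltration_antitone p E n.le_succ
    (pow_prime_pow_mem_unitFiltration p hu n))
  have hdvd : (m : ℤ) ∣ (p ^ n : ℕ) * v u := by
    rw [← normalizedVal_pow hv, ← hw, powMonoidHom_apply, normalizedVal_pow hv]
    exact dvd_mul_right _ _
  have hcoprime : IsCoprime (m : ℤ) (p ^ n : ℕ) := by
    rw [Nat.isCoprime_iff_coprime]
    exact Nat.Coprime.pow_right n (by simp [m])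
  refine Int.eq_zero_of_abs_lt_dvd (hcoprime.dvd_of_dvd_mul_left hdvd) ?_
  have hp := (Fact.out : p.Prime).pos
  rw [Int.abs_eq_natAbs]
  exact_mod_cast Nat.lt_succ_of_le (Nat.le_mul_of_pos_left _ hp)

theorem normalizedVal_nonneg_of_absVal_lt_one (hv : IsNormalizedVal p E v) {u : Eˣ}
    (hu : absVal p E u < 1) : 0 ≤ v u := by
  have h1u : absVal p E (1 + u) = 1 := (absVal p E).map_one_add_of_lt hu
  have h1u0 : (1 + u : E) ≠ 0 := (absVal p E).ne_zero_iff.1 (h1u ▸ one_ne_zero)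
  have hzero : v (1 + u) = 0 :=
    normalizedVal_eq_zero_of_mem_unitFiltration_one hv (u := Units.mk0 _ h1u0)
      ((mem_unitFiltration_of_ne_zero p one_ne_zero).2 (by
        simpa using (absVal_lt_one_iff_le_unifAbs p).1 hu))
  have hneg : v (-1) = 0 := by
    have h1 := normalizedVal_pow hv 1 0
    have h2 := normalizedVal_pow hv (-1) 2
    simp only [pow_zero, even_two, Even.neg_pow, one_pow, Units.val_neg, Units.val_one] at h1 h2
    lia
  have := hv.2.1 (1 + u) (-1) h1u0 (by simp) (by simp)
  simpa [hzero, hneg] using this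

theorem normalizedVal_nonneg_of_absVal_eq_one (hv : IsNormalizedVal p E v) {u : Eˣ}
    (hu : absVal p E u = 1) : 0 ≤ v u := by
  have hp : (p : E) ≠ 0 := (absVal p E).ne_zero_iff.1
    (absVal_natCast_ne_zero p (Fact.out : p.Prime).ne_zero)
  have hnonneg := normalizedVal_nonneg_of_absVal_lt_one hv
    (u := Units.mk0 (p : E) hp * u ^ (v p + 1).toNat) (by simp [hu, absVal_prime_lt_one])
  rw [Units.val_mul, hv.1 _ _ (Units.ne_zero _) (Units.ne_zero _), normalizedVal_pow hv,
    Units.val_mk0, Int.toNat_of_nonneg (by linarith [hv.2.2.2])] at hnonneg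
  have := hv.2.2.2
  by_contra! hlt
  nlinarith

theorem normalizedVal_eq_zero_of_absVal_eq_one (hv : IsNormalizedVal p E v) {u : Eˣ}
    (hu : absVal p E u = 1) : v u = 0 := by
  refine le_antisymm ?_ (normalizedVal_nonneg_of_absVal_eq_one hv hu)
  have := normalizedVal_nonneg_of_absVal_eq_one hv (u := u⁻¹) (by simp [hu])
  rw [← zpow_neg_one, normalizedVal_zpow hv] at this
  linarith

theorem normalizedVal_eq_ord (hv : IsNormalizedVal p E v) (u : Eˣ) :
    v u = (ord p E u).toAdd := by
  obtain ⟨ϖ, hϖ⟩ := ord_surjective p E (.ofAdd 1)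
  have val_eq (w : Eˣ) : v w = (ord p E w).toAdd * v ϖ := by
    have hunit : absVal p E (w / ϖ ^ (ord p E w).toAdd : Eˣ) = 1 := by
      rw [← mem_unitFiltration_zero, ← ker_ord, MonoidHom.mem_ker, map_div, map_zpow, hϖ,
        ← ofAdd_zsmul, smul_eq_mul, mul_one, ofAdd_toAdd, div_self']
    conv_lhs => rw [← div_mul_cancel w (ϖ ^ (ord p E w).toAdd), Units.val_mul,
      hv.1 _ _ (Units.ne_zero _) (Units.ne_zero _), normalizedVal_zpow hv,
      normalizedVal_eq_zero_of_absVal_eq_one hv hunit, zero_add]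
  have hϖ_nonneg : 0 ≤ v ϖ := normalizedVal_nonneg_of_absVal_lt_one hv (by
    rw [(ord_eq_ofAdd_iff p).1 hϖ, zpow_one]; exact unifAbs_lt_one p E)
  obtain ⟨π, hπ0, hπ⟩ := hv.2.2.1
  have hϖ_one : v ϖ = 1 := Int.eq_one_of_dvd_one hϖ_nonneg
    ⟨_, (hπ.symm.trans (val_eq (Units.mk0 π hπ0))).trans (mul_comm _ _)⟩
  rw [val_eq, hϖ_one, mul_one]

theorem absVal_eq_unifAbs_zpow (hv : IsNormalizedVal p E v) {x : E} (hx : x ≠ 0) :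
    absVal p E x = unifAbs p E ^ v x := by
  have := absVal_eq_unifAbs_zpow_ord p (Units.mk0 x hx)
  rwa [← normalizedVal_eq_ord hv] at this

end NormalizedValuation

section IntegersTower

variable (p : ℕ) [Fact p.Prime] (K L : Type*) [Field K] [Algebra ℚ_[p] K]
  [FiniteDimensional ℚ_[p] K] [Field L] [Algebra ℚ_[p] L] [FiniteDimensional ℚ_[p] L]
  [Algebra K L] [IsScalarTower ℚ_[p] K L]

variable {L} in
theorem norm_coeff_minpoly_le_one {x : L} (hx : absVal p L x ≤ 1) (i : ℕ) :
    ‖(minpoly ℚ_[p] x).coeff i‖ ≤ 1 := by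
  have hmonic := minpoly.monic (IsIntegral.of_finite ℚ_[p] x)
  rcases lt_trichotomy i (minpoly ℚ_[p] x).natDegree with hi | rfl | hi
  · have term_le : spectralValueTerms (minpoly ℚ_[p] x) i ≤ 1 :=
      (le_ciSup (spectralValueTerms_bddAbove _) i).trans hx
    rw [spectralValueTerms_of_lt_natDegree _ hi] at term_le
    have hexp : (0 : ℝ) < 1 / ((minpoly ℚ_[p] x).natDegree - i) :=
      one_div_pos.2 (sub_pos.2 (by exact_mod_cast hi))
    exact not_lt.1 fun hlt ↦ term_le.not_gt (Real.one_lt_rpow hlt hexp)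
  · rw [Polynomial.coeff_natDegree, hmonic.leadingCoeff, norm_one]
  · rw [Polynomial.coeff_eq_zero_of_natDegree_lt hi, norm_zero]
    exact zero_le_one

instance : (absVal p K).HasExtension (absVal p L) where
  val_isEquiv_comap x y := by simp only [Valuation.comap_apply, absVal_algebraMap]

theorem exists_unifAbs_eq_pow : ∃ e : ℕ, unifAbs p K = unifAbs p L ^ e := by
  have := (absVal_le_one_iff_exists_eq_pow p (x := algebraMap K L (uniformizer p K))
    ((absVal p L).ne_zero_iff.1 (by rw [absVal_algebraMap]; exact (unifAbs_pos p K).ne'))).1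
    (by rw [absVal_algebraMap]; exact (unifAbs_lt_one p K).le)
  rwa [absVal_algebraMap] at this

theorem unifAbs_pow_injective : Function.Injective (unifAbs p L ^ · : ℕ → ℝ≥0) :=
  pow_right_injective₀ (unifAbs_pos p L) (unifAbs_lt_one p L).ne

instance : Algebra.IsIntegral (integers p K) (integers p L) where
  isIntegral x := by
    let f := (minpoly ℚ_[p] (x : L)).map (algebraMap ℚ_[p] K)
    have hmonic : f.Monic := (minpoly.monic (IsIntegral.of_finite ℚ_[p] (x : L))).map _
    have hlifts : f ∈ Polynomial.lifts (algebraMap (integers p K) K) := by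
      rw [Polynomial.lifts_iff_coeff_lifts]
      refine fun n ↦ ⟨⟨f.coeff n, ?_⟩, rfl⟩
      rw [(absVal p K).mem_valuationSubring_iff, Polynomial.coeff_map, absVal_algebraMap_padic]
      exact norm_coeff_minpoly_le_one p x.2 n
    obtain ⟨g, hg, -, hgmonic⟩ := Polynomial.lifts_and_natDegree_eq_and_monic hlifts hmonic
    refine ⟨g, hgmonic, (FaithfulSMul.algebraMap_injective (integers p L) L) ?_⟩
    rw [← Polynomial.aeval_def, ← Polynomial.aeval_algebraMap_apply, map_zero,
      ← Polynomial.aeval_map_algebraMap K, hg, Polynomial.aeval_map_algebraMap]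
    exact minpoly.aeval ℚ_[p] (x : L)

theorem maximalIdeal_map_le_pow_iff {n : ℕ} :
    (maximalIdeal (integers p K)).map (algebraMap (integers p K) (integers p L)) ≤
      maximalIdeal (integers p L) ^ n ↔ unifAbs p K ≤ unifAbs p L ^ n := by
  rw [(irreducible_uniformizer p K).maximalIdeal_eq, Ideal.map_span, Set.image_singleton,
    Ideal.span_singleton_le_iff_mem, mem_maximalIdeal_pow_iff,
    Valuation.HasExtension.coe_algebraMap_valuationSubring_eq, absVal_algebraMap]
  rfl

instance : Module.IsTorsionFree (integers p K) (integers p L) :=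
  inferInstanceAs (Module.IsTorsionFree (absVal p K).integer (absVal p L).integer)

variable [FiniteDimensional K L]

instance : IsIntegralClosure (integers p L) (integers p K) L :=
  IsIntegralClosure.of_isIntegrallyClosed _ _ _

instance : Module.Finite (integers p K) (integers p L) :=
  have : CharZero K := charZero_of_injective_algebraMap (algebraMap ℚ_[p] K).injective
  IsIntegralClosure.finite (integers p K) K L (integers p L)

instance : Module.Free (integers p K) (integers p L) :=
  Module.free_of_finite_type_torsion_free'

end IntegersTower

section Inertia

variable (p : ℕ) [Fact p.Prime] (K L : Type*) [Field K] [Algebra ℚ_[p] K] [Field L]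
  [Algebra ℚ_[p] L] [FiniteDimensional ℚ_[p] L] [Algebra K L] [IsScalarTower ℚ_[p] K L]

/-- The inertia group of `L / K`: the automorphisms acting trivially on the residue field. -/
noncomputable def inertia : Subgroup (L ≃ₐ[K] L) where
  carrier := {g | ∀ x : L, absVal p L x ≤ 1 → absVal p L (g x - x) < 1}
  one_mem' x _ := by simp
  mul_mem' {g h} hg hh x hx := by
    rw [AlgEquiv.mul_apply, ← sub_add_sub_cancel _ (h x)]
    exact (absVal p L).map_add_lt (hg _ (by rwa [absVal_algEquiv])) (hh x hx)
  inv_mem' {g} hg x hx := by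
    have := hg (g⁻¹ x) (by rwa [absVal_algEquiv])
    rwa [← AlgEquiv.mul_apply, mul_inv_cancel, AlgEquiv.one_apply, Valuation.map_sub_swap] at this

noncomputable instance : MulSemiringAction (L ≃ₐ[K] L) (integers p L) where
  smul g x := ⟨g x, ((absVal_algEquiv p g x).le.trans x.2 :)⟩
  one_smul _ := rfl
  mul_smul _ _ _ := rfl
  smul_zero g := Subtype.ext (map_zero g)
  smul_add g _ _ := Subtype.ext (map_add g _ _)
  smul_one g := Subtype.ext (map_one g)
  smul_mul g _ _ := Subtype.ext (map_mul g _ _)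

instance : SMulDistribClass (L ≃ₐ[K] L) (integers p L) L where
  smul_distrib_smul g _ _ := map_mul g _ _

theorem inertia_eq_inertia_maximalIdeal :
    inertia p K L = (maximalIdeal (integers p L)).inertia (L ≃ₐ[K] L) := by
  ext g
  have mem_iff (x : integers p L) : g • x - x ∈ maximalIdeal (integers p L) ↔
      absVal p L (g x - x) < 1 := (absVal p L).mem_maximalIdeal_iff
  exact ⟨fun hg x ↦ (mem_iff x).2 (hg x x.2), fun hg x hx ↦ (mem_iff ⟨x, hx⟩).1 (hg ⟨x, hx⟩)⟩

theorem unifAbs_eq_pow_card_inertia [FiniteDimensional ℚ_[p] K] [FiniteDimensional K L]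
    [IsGalois K L] :
    unifAbs p K = unifAbs p L ^ Nat.card (inertia p K L) := by
  obtain ⟨e, he⟩ := exists_unifAbs_eq_pow p K L
  have : IsGaloisGroup (L ≃ₐ[K] L) (integers p K) (integers p L) :=
    IsGaloisGroup.of_isFractionRing _ _ _ K L
  have : Finite (maximalIdeal (integers p K)).ResidueField :=
    have : Finite (integers p K ⧸ maximalIdeal (integers p K)) :=
      inferInstanceAs (Finite (ResidueField (integers p K)))
    Finite.of_surjective _
      (maximalIdeal (integers p K)).bijective_algebraMap_quotient_residueField.2
  have hmap : (maximalIdeal (integers p K)).map (algebraMap (integers p K) (integers p L)) ≠ ⊥ :=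
    Ideal.map_ne_bot_of_ne_bot (IsDiscreteValuationRing.not_a_field _)
  rw [inertia_eq_inertia_maximalIdeal,
    Ideal.card_inertia_eq_ramificationIdxIn (maximalIdeal (integers p K)),
    Ideal.ramificationIdxIn_eq_ramificationIdx _ (maximalIdeal (integers p L)) (L ≃ₐ[K] L),
    ← Ideal.ramificationIdx'_eq_ramificationIdx' _ _ hmap,
    Ideal.ramificationIdx'_spec (n := e), he]
  · rw [maximalIdeal_map_le_pow_iff, he]
  · rw [maximalIdeal_map_le_pow_iff, he, not_le]
    exact pow_lt_pow_right_of_lt_one₀ (unifAbs_pos p L) (unifAbs_lt_one p L) e.lt_succ_self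

end Inertia

section BaseChange

variable (K F L M : Type*) [Field K] [Field F] [Field L] [Field M] [Algebra K F]
  [Algebra K M] [Algebra F M] [Algebra L M] [IsScalarTower K F M]

theorem algebra_adjoin_range_eq_top [FiniteDimensional F M]
    (hcomp : IntermediateField.adjoin K
      (Set.range (algebraMap F M) ∪ Set.range (algebraMap L M)) = ⊤) :
    Algebra.adjoin F (Set.range (algebraMap L M)) = ⊤ := by
  rw [← IntermediateField.adjoin_eq_top_iff,
    ← IntermediateField.restrictScalars_eq_top_iff (K := K), ← top_le_iff, ← hcomp,
    IntermediateField.adjoin_le_iff, Set.union_subset_iff]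
  refine ⟨?_, IntermediateField.subset_adjoin F _⟩
  rintro _ ⟨x, rfl⟩
  exact IntermediateField.algebraMap_mem _ x

variable [Algebra K L] [IsScalarTower K L M]

/-- The restriction homomorphism `Gal(M / F) → Gal(L / K)` for a normal extension `L / K`. -/
noncomputable def galRestriction [Normal K L] : (M ≃ₐ[F] M) →* (L ≃ₐ[K] L) :=
  (AlgEquiv.restrictNormalHom L).comp (AlgEquiv.restrictScalarsHom K)

variable {F} in
theorem algebraMap_galRestriction_apply [Normal K L] (g : M ≃ₐ[F] M) (x : L) :
    algebraMap L M (galRestriction K F L M g x) = g (algebraMap L M x) :=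
  AlgEquiv.restrictNormal_commutes (g.restrictScalars K) L x

theorem galRestriction_injective [Normal K L]
    (hcomp : Algebra.adjoin F (Set.range (algebraMap L M)) = ⊤) :
    Function.Injective (galRestriction K F L M) := by
  refine fun g h hgh ↦ AlgEquiv.coe_toAlgHom_injective (AlgHom.ext_of_adjoin_eq_top hcomp ?_)
  rintro _ ⟨x, rfl⟩
  exact (algebraMap_galRestriction_apply K L M g x).symm.trans
    ((congrArg (fun σ : L ≃ₐ[K] L ↦ algebraMap L M (σ x)) hgh).trans
      (algebraMap_galRestriction_apply K L M h x))

variable (p : ℕ) [Fact p.Prime] [Algebra ℚ_[p] K] [Algebra ℚ_[p] F] [Algebra ℚ_[p] L]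
  [FiniteDimensional ℚ_[p] L] [Algebra ℚ_[p] M] [FiniteDimensional ℚ_[p] M]
  [IsScalarTower ℚ_[p] K L] [IsScalarTower ℚ_[p] F M] [IsScalarTower ℚ_[p] L M]

theorem inertia_le_comap_galRestriction [Normal K L] :
    inertia p F M ≤ (inertia p K L).comap (galRestriction K F L M) := fun g hg x hx ↦ by
  have := hg (algebraMap L M x) (by rwa [absVal_algebraMap])
  rwa [← algebraMap_galRestriction_apply K L M, ← map_sub, absVal_algebraMap] at this

variable [FiniteDimensional ℚ_[p] K] [FiniteDimensional ℚ_[p] F] [FiniteDimensional K L]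
  [FiniteDimensional F M] [IsGalois K L] [IsGalois F M]

theorem unifAbs_eq_and_card_inertia_eq (hunram : unifAbs p K = unifAbs p F)
    (hcomp : Algebra.adjoin F (Set.range (algebraMap L M)) = ⊤) :
    unifAbs p L = unifAbs p M ∧ Nat.card (inertia p F M) = Nat.card (inertia p K L) := by
  obtain ⟨e, he⟩ := exists_unifAbs_eq_pow p L M
  have card_eq : e * Nat.card (inertia p K L) = Nat.card (inertia p F M) := by
    refine unifAbs_pow_injective p M ?_
    beta_reduce
    rw [pow_mul, ← he, ← unifAbs_eq_pow_card_inertia, ← unifAbs_eq_pow_card_inertia, hunram]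
  have card_le : Nat.card (inertia p F M) ≤ Nat.card (inertia p K L) := by
    rw [← Subgroup.card_map_of_injective (galRestriction_injective K F L M hcomp)]
    exact Subgroup.card_le_of_le
      (Subgroup.map_le_iff_le_comap.2 (inertia_le_comap_galRestriction K F L M p))
  have he_le : e ≤ 1 := by nlinarith [Nat.card_pos (α := inertia p K L)]
  have he_pos : e ≠ 0 := by
    rintro rfl
    exact (unifAbs_lt_one p L).ne (he.trans (pow_zero _))
  obtain rfl : e = 1 := by omega
  exact ⟨he.trans (pow_one _), by rw [← card_eq, one_mul]⟩

theorem map_inertia_galRestriction (hunram : unifAbs p K = unifAbs p F)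
    (hcomp : Algebra.adjoin F (Set.range (algebraMap L M)) = ⊤) :
    (inertia p F M).map (galRestriction K F L M) = inertia p K L := by
  refine Subgroup.eq_of_le_of_card_ge
    (Subgroup.map_le_iff_le_comap.2 (inertia_le_comap_galRestriction K F L M p)) ?_
  rw [Subgroup.card_map_of_injective (galRestriction_injective K F L M hcomp),
    (unifAbs_eq_and_card_inertia_eq K F L M p hunram hcomp).2]

end BaseChange

section Derivation

variable (p : ℕ) [Fact p.Prime] {K L : Type*} [Field K] [Algebra ℚ_[p] K] [Field L]
  [Algebra ℚ_[p] L] [FiniteDimensional ℚ_[p] L] [Algebra K L] [IsScalarTower ℚ_[p] K L]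

theorem absVal_card_residueField_le :
    absVal p L (Nat.card (ResidueField (integers p L))) ≤ unifAbs p L := by
  let _ := Fintype.ofFinite (ResidueField (integers p L))
  have residue_eq : residue (integers p L)
      (Nat.card (ResidueField (integers p L))) = 0 := by
    rw [map_natCast, Nat.card_eq_fintype_card, FiniteField.cast_card_eq_zero]
  rw [residue_eq_zero_iff, (absVal p L).mem_maximalIdeal_iff] at residue_eq
  exact (absVal_lt_one_iff_le_unifAbs p).1 (by exact_mod_cast residue_eq)

/-- With `q` the size of the residue field, every integer is `x = x ^ q + ϖ z`, and `x ↦ x ^ q`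
contracts distances; so a bound for `g z - z` modulo `ϖ ^ n` improves to one modulo
`ϖ ^ (n + 1)`. -/
theorem absVal_algEquiv_sub_le_pow {g : L ≃ₐ[K] L} (hg : g ∈ inertia p K L) {ϖ : L}
    (hϖ : absVal p L ϖ = unifAbs p L) {n : ℕ} (hn : absVal p L (g ϖ - ϖ) ≤ unifAbs p L ^ n) {x : L}
    (hx : absVal p L x ≤ 1) : absVal p L (g x - x) ≤ unifAbs p L ^ n := by
  have hr : unifAbs p L ≤ 1 := (unifAbs_lt_one p L).le
  induction n generalizing x with
  | zero => simpa using (hg x hx).le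
  | succ n ih =>
    replace ih {x : L} (hx : absVal p L x ≤ 1) :=
      ih (hn.trans (pow_le_pow_of_le_one zero_le hr n.le_succ)) hx
    let q := Nat.card (ResidueField (integers p L))
    have hϖ0 : ϖ ≠ 0 := (absVal p L).ne_zero_iff.1 (hϖ ▸ (unifAbs_pos p L).ne')
    obtain ⟨z, hz⟩ : ∃ z, x = x ^ q + ϖ * z := ⟨(x - x ^ q) / ϖ, by field_simp; ring⟩
    have hz1 : absVal p L z ≤ 1 := by
      have := (absVal_lt_one_iff_le_unifAbs p).1 (absVal_pow_card_residueField_sub_lt_one p hx)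
      rw [Valuation.map_sub_swap, sub_eq_of_eq_add' hz, map_mul, hϖ] at this
      exact le_of_mul_le_mul_left (by rwa [mul_one]) (unifAbs_pos p L)
    have hgz : g x = g x ^ q + g ϖ * g z := by
      rw [← map_pow, ← map_mul, ← map_add, ← hz]
    have split : g x - x = (g x ^ q - x ^ q) + ((g ϖ - ϖ) * g z + ϖ * (g z - z)) := by
      linear_combination hgz - hz
    rw [split]
    refine (absVal p L).map_add_le ?_ ((absVal p L).map_add_le ?_ ?_)
    · have := absVal_add_pow_sub_pow_le p hx (hg x hx).le q
      rw [add_sub_cancel] at this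
      refine this.trans (max_le ?_ ?_)
      · rw [pow_succ']
        exact mul_le_mul' (absVal_card_residueField_le p) (ih hx)
      · rw [sq, pow_succ']
        exact mul_le_mul' ((absVal_lt_one_iff_le_unifAbs p).1 (hg x hx)) (ih hx)
    · rw [map_mul, absVal_algEquiv]
      exact (mul_le_of_le_one_right' hz1).trans hn
    · rw [map_mul, hϖ, pow_succ']
      exact mul_le_mul_right (ih hz1) _

theorem absVal_algEquiv_sub_le {g : L ≃ₐ[K] L} (hg : g ∈ inertia p K L) {ϖ : L}
    (hϖ : absVal p L ϖ = unifAbs p L) {x : L} (hx : absVal p L x ≤ 1) :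
    absVal p L (g x - x) ≤ absVal p L (g ϖ - ϖ) := by
  rcases eq_or_ne (g ϖ - ϖ) 0 with h0 | h0
  · refine not_lt.1 fun hlt ↦ ?_
    obtain ⟨n, hn⟩ := exists_unifAbs_pow_lt p (E := L) (zero_le.trans_lt hlt)
    exact hn.not_ge (absVal_algEquiv_sub_le_pow p hg hϖ (by simp [h0]) hx)
  · obtain ⟨n, hn⟩ := (absVal_le_one_iff_exists_eq_pow p h0).1
      (hg ϖ (hϖ ▸ (unifAbs_lt_one p L).le)).le
    rw [hn]
    exact absVal_algEquiv_sub_le_pow p hg hϖ hn.le hx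

end Derivation

section Jump

variable (p : ℕ) [Fact p.Prime] {K L : Type*} [Field K] [Algebra ℚ_[p] K]
  [FiniteDimensional ℚ_[p] K] [Field L] [Algebra ℚ_[p] L] [FiniteDimensional ℚ_[p] L] [Algebra K L]

/-- `θ` is an element of `O_L` generating it as an algebra over `O_K`. -/
structure IsIntegralGenerator (K : Type*) {L : Type*} [Field K] [Algebra ℚ_[p] K]
    [FiniteDimensional ℚ_[p] K] [Field L] [Algebra ℚ_[p] L] [FiniteDimensional ℚ_[p] L]
    [Algebra K L] (θ : L) : Prop where
  absVal_le_one : absVal p L θ ≤ 1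
  exists_aeval_eq : ∀ x : L, absVal p L x ≤ 1 →
    ∃ q : Polynomial K, (∀ i, absVal p K (q.coeff i) ≤ 1) ∧ Polynomial.aeval θ q = x

variable {p} in
theorem absVal_le_one_iff_normalizedVal {v : K → ℤ} (hv : IsNormalizedVal p K v) (x : K) :
    absVal p K x ≤ 1 ↔ x = 0 ∨ 0 ≤ v x := by
  rcases eq_or_ne x 0 with rfl | hx
  · simp
  · rw [absVal_eq_unifAbs_zpow hv hx, ← zpow_zero (unifAbs p K), unifAbs_zpow_le_iff]
    simp [hx]

variable {p} in
theorem isIntegralGenerator_of_normalizedVal {vK : K → ℤ} {vL : L → ℤ}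
    (hvK : IsNormalizedVal p K vK) (hvL : IsNormalizedVal p L vL) {θ : L} (hθ : θ = 0 ∨ 0 ≤ vL θ)
    (hgen : ∀ x : L, x ≠ 0 → 0 ≤ vL x → ∃ q : Polynomial K,
      (∀ i, q.coeff i = 0 ∨ 0 ≤ vK (q.coeff i)) ∧ Polynomial.aeval θ q = x) :
    IsIntegralGenerator p K θ where
  absVal_le_one := (absVal_le_one_iff_normalizedVal hvL θ).2 hθ
  exists_aeval_eq x hx := by
    rcases eq_or_ne x 0 with rfl | hx0
    · exact ⟨0, by simp, map_zero _⟩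
    · obtain ⟨q, hq, hqx⟩ :=
        hgen x hx0 (((absVal_le_one_iff_normalizedVal hvL x).1 hx).resolve_left hx0)
      exact ⟨q, fun i ↦ (absVal_le_one_iff_normalizedVal hvK _).2 (hq i), hqx⟩

variable {p} [IsScalarTower ℚ_[p] K L] {θ : L}

namespace IsIntegralGenerator

theorem absVal_algEquiv_sub_le (hθ : IsIntegralGenerator p K θ) (g : L ≃ₐ[K] L) {x : L}
    (hx : absVal p L x ≤ 1) : absVal p L (g x - x) ≤ absVal p L (g θ - θ) := by
  obtain ⟨q, hq, rfl⟩ := hθ.exists_aeval_eq x hx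
  rw [← Polynomial.aeval_algHom_apply g, Polynomial.aeval_eq_sum_range,
    Polynomial.aeval_eq_sum_range, ← Finset.sum_sub_distrib]
  refine (absVal p L).map_sum_le fun i _ ↦ ?_
  obtain ⟨y, hy⟩ := sub_dvd_pow_sub_pow (⟨g θ, (absVal_algEquiv p g θ).le.trans hθ.absVal_le_one⟩ :
    integers p L) ⟨θ, hθ.absVal_le_one⟩ i
  have pow_sub : g θ ^ i - θ ^ i = (g θ - θ) * y := congrArg Subtype.val hy
  rw [← smul_sub, pow_sub, Algebra.smul_def, map_mul, map_mul, absVal_algebraMap]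
  exact (mul_le_of_le_one_left' (hq i)).trans (mul_le_of_le_one_right' y.2)

theorem algEquiv_sub_ne_zero (hθ : IsIntegralGenerator p K θ) {g : L ≃ₐ[K] L} (hg : g ≠ 1) :
    g θ - θ ≠ 0 := by
  refine fun h0 ↦ hg (AlgEquiv.ext fun x ↦ ?_)
  have fixed (y : L) (hy : absVal p L y ≤ 1) : g y = y := by
    have := hθ.absVal_algEquiv_sub_le g hy
    rwa [h0, map_zero, nonpos_iff_eq_zero, (absVal p L).zero_iff, sub_eq_zero] at this
  rcases (absVal p L).val_le_one_or_val_inv_le_one x with hx | hx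
  · exact fixed x hx
  · exact inv_injective ((map_inv₀ g x).symm.trans (fixed _ hx))

theorem mem_inertia_iff (hθ : IsIntegralGenerator p K θ) {g : L ≃ₐ[K] L} :
    g ∈ inertia p K L ↔ absVal p L (g θ - θ) < 1 :=
  ⟨fun hg ↦ hg θ hθ.absVal_le_one, fun hg _ hx ↦ (hθ.absVal_algEquiv_sub_le g hx).trans_lt hg⟩

theorem mem_inertia_iff_normalizedVal (hθ : IsIntegralGenerator p K θ) {v : L → ℤ}
    (hv : IsNormalizedVal p L v) {g : L ≃ₐ[K] L} :
    g ∈ inertia p K L ↔ g = 1 ∨ (g θ - θ ≠ 0 ∧ 1 ≤ v (g θ - θ)) := by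
  rcases eq_or_ne g 1 with rfl | hg
  · simp [one_mem]
  · have h0 := hθ.algEquiv_sub_ne_zero hg
    rw [hθ.mem_inertia_iff, absVal_lt_one_iff_le_unifAbs, absVal_eq_unifAbs_zpow hv h0]
    nth_rw 2 [← zpow_one (unifAbs p L)]
    rw [unifAbs_zpow_le_iff]
    simp [hg, h0]

open scoped Classical in
theorem mJump_eq [FiniteDimensional K L] (hθ : IsIntegralGenerator p K θ) {v : L → ℤ}
    (hv : IsNormalizedVal p L v) :
    mJump K v θ =
      let S : Finset (L ≃ₐ[K] L) := {g | g ∈ inertia p K L ∧ g ≠ 1}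
      let i (g : L ≃ₐ[K] L) : ℕ := (v (g θ - θ)).toNat
      let c : ℕ := S.sup i
      (c + ∑ g ∈ S, (min (i g) c : ℝ)) / Nat.card (inertia p K L) - 1 := by
  have sup_eq : Finset.sup {g : L ≃ₐ[K] L | g ≠ 1} (fun g ↦ (v (g θ - θ)).toNat) =
      Finset.sup {g : L ≃ₐ[K] L | g ∈ inertia p K L ∧ g ≠ 1} fun g ↦ (v (g θ - θ)).toNat := by
    refine le_antisymm (Finset.sup_le fun g hg ↦ ?_) (Finset.sup_mono fun g ↦ by simp)
    by_cases hgI : g ∈ inertia p K L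
    · exact Finset.le_sup (f := fun g : L ≃ₐ[K] L ↦ (v (g θ - θ)).toNat) (by simp_all)
    · rw [hθ.mem_inertia_iff_normalizedVal hv] at hgI
      have := hθ.algEquiv_sub_ne_zero (Finset.mem_filter.1 hg).2
      simp only [Int.toNat_le]
      grind
  simp only [mJump, ← hθ.mem_inertia_iff_normalizedVal hv, Finset.filter_filter, sup_eq,
    Nat.card_eq_fintype_card, Fintype.card_subtype]

end IsIntegralGenerator

end Jump

section JumpBaseChange

variable {p : ℕ} [Fact p.Prime] (K F L M : Type*) [Field K] [Field F] [Field L] [Field M]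
  [Algebra K F] [Algebra K L] [Algebra K M] [Algebra F M] [Algebra L M] [IsScalarTower K F M]
  [IsScalarTower K L M] [Algebra ℚ_[p] K] [Algebra ℚ_[p] F] [Algebra ℚ_[p] L]
  [FiniteDimensional ℚ_[p] L] [Algebra ℚ_[p] M] [FiniteDimensional ℚ_[p] M]
  [IsScalarTower ℚ_[p] K L] [IsScalarTower ℚ_[p] F M] [IsScalarTower ℚ_[p] L M]
  [FiniteDimensional ℚ_[p] K] [FiniteDimensional ℚ_[p] F]

theorem absVal_galRestriction_sub [Normal K L] (hLM : unifAbs p L = unifAbs p M) {θL : L} {θM : M}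
    (hθL : IsIntegralGenerator p K θL) (hθM : IsIntegralGenerator p F θM) {g : M ≃ₐ[F] M}
    (hg : g ∈ inertia p F M) :
    absVal p L (galRestriction K F L M g θL - θL) = absVal p M (g θM - θM) := by
  have restrict (x : L) : absVal p L (galRestriction K F L M g x - x) =
      absVal p M (g (algebraMap L M x) - algebraMap L M x) := by
    rw [← algebraMap_galRestriction_apply K L M, ← map_sub, absVal_algebraMap]
  refine le_antisymm ?_ ?_
  · rw [restrict]
    exact hθM.absVal_algEquiv_sub_le g ((absVal_algebraMap p θL).le.trans hθL.absVal_le_one)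
  · refine (absVal_algEquiv_sub_le p hg (ϖ := algebraMap L M (uniformizer p L))
      ((absVal_algebraMap p _).trans hLM) hθM.absVal_le_one).trans ?_
    rw [← restrict]
    exact hθL.absVal_algEquiv_sub_le _ (uniformizer p L).2

variable [FiniteDimensional K L] [FiniteDimensional F M] [IsGalois K L] [IsGalois F M]

theorem mJump_eq_mJump (hunram : unifAbs p K = unifAbs p F)
    (hcomp : Algebra.adjoin F (Set.range (algebraMap L M)) = ⊤) {θL : L} {θM : M}
    (hθL : IsIntegralGenerator p K θL) (hθM : IsIntegralGenerator p F θM) {vL : L → ℤ} {vM : M → ℤ}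
    (hvL : IsNormalizedVal p L vL) (hvM : IsNormalizedVal p M vM) :
    mJump F vM θM = mJump K vL θL := by
  classical
  obtain ⟨hLM, hcard⟩ := unifAbs_eq_and_card_inertia_eq K F L M p hunram hcomp
  have hinj := galRestriction_injective K F L M hcomp
  have hinj1 {g : M ≃ₐ[F] M} : galRestriction K F L M g = 1 ↔ g = 1 :=
    map_eq_one_iff _ hinj
  have image_eq : ({σ | σ ∈ inertia p K L ∧ σ ≠ 1} : Finset (L ≃ₐ[K] L)) =
      Finset.image (galRestriction K F L M) {g | g ∈ inertia p F M ∧ g ≠ 1} := by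
    ext σ
    simp only [← map_inertia_galRestriction K F L M p hunram hcomp, Subgroup.mem_map,
      Finset.mem_filter, Finset.mem_univ, true_and, Finset.mem_image]
    constructor
    · rintro ⟨⟨g, hg, rfl⟩, h1⟩
      exact ⟨g, ⟨hg, by rwa [ne_eq, hinj1] at h1⟩, rfl⟩
    · rintro ⟨g, ⟨hg, h1⟩, rfl⟩
      exact ⟨⟨g, hg, rfl⟩, by rwa [ne_eq, hinj1]⟩
  have val_eq (g : M ≃ₐ[F] M) (hg : g ∈ ({g | g ∈ inertia p F M ∧ g ≠ 1} : Finset (M ≃ₐ[F] M))) :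
      vL (galRestriction K F L M g θL - θL) = vM (g θM - θM) := by
    obtain ⟨hgI, hg1⟩ := (Finset.mem_filter.1 hg).2
    have := absVal_galRestriction_sub K F L M hLM hθL hθM hgI
    rw [absVal_eq_unifAbs_zpow hvL (hθL.algEquiv_sub_ne_zero (hinj1.not.2 hg1)),
      absVal_eq_unifAbs_zpow hvM (hθM.algEquiv_sub_ne_zero hg1), hLM] at this
    exact unifAbs_zpow_injective p this
  simp only [hθL.mJump_eq hvL, hθM.mJump_eq hvM, hcard, image_eq, Finset.sup_image,
    Finset.sum_image hinj.injOn, Function.comp_def]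
  have sup_eq := Finset.sup_congr rfl fun g hg ↦ congrArg Int.toNat (val_eq g hg)
  rw [sup_eq]
  congr 3
  exact Finset.sum_congr rfl fun g hg ↦ by rw [val_eq g hg]

end JumpBaseChange

section Herbrand

variable {G : Type*} [CommGroup G]

theorem relIndex_eq_relIndex_map_mul_relIndex_inf_ker {G' : Type*} [Group G'] (φ : G →* G')
    {A B : Subgroup G} (hAB : A ≤ B) :
    A.relIndex B = (A.map φ).relIndex (B.map φ) * (A ⊓ φ.ker).relIndex (B ⊓ φ.ker) := by
  have sup_inf : (A ⊔ φ.ker) ⊓ B = B ⊓ φ.ker ⊔ A := by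
    rw [inf_comm, sup_comm, inf_sup_assoc_of_le _ hAB]
  have inf_inf : A ⊓ φ.ker = A ⊓ (B ⊓ φ.ker) := by
    rw [← inf_assoc, inf_eq_left.2 hAB]
  have sup_sup : B ⊔ φ.ker = B ⊔ (A ⊔ φ.ker) := by
    rw [← sup_assoc, sup_eq_left.2 hAB]
  rw [Subgroup.relIndex_map_map, sup_sup, Subgroup.relIndex_sup_right,
    ← Subgroup.inf_relIndex_right (A ⊔ φ.ker), inf_inf, Subgroup.inf_relIndex_right A,
    ← Subgroup.relIndex_sup_right (B ⊓ φ.ker) A, ← sup_inf, mul_comm,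
    Subgroup.relIndex_mul_relIndex _ _ _ (le_inf le_sup_left hAB) inf_le_right]

/-- The Herbrand quotient of the pair `φ, ψ` is multiplicative, trivial on `B / A` because `B / A`
is finite, and trivial on `A` by assumption. -/
theorem relIndex_map_inf_ker_comm {φ ψ : G →* G} {A B : Subgroup G} (hAB : A ≤ B)
    (hfin : A.relIndex B ≠ 0) (hφ : B.map φ ≤ B ⊓ ψ.ker) (hψ : B.map ψ ≤ B ⊓ φ.ker)
    (hAφ : A ⊓ φ.ker = A.map ψ) (hAψ : A ⊓ ψ.ker = A.map φ) :
    (B.map ψ).relIndex (B ⊓ φ.ker) = (B.map φ).relIndex (B ⊓ ψ.ker) := by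
  have eqφ : A.relIndex B = (A.map φ).relIndex (B.map φ) *
      ((A.map ψ).relIndex (B.map ψ) * (B.map ψ).relIndex (B ⊓ φ.ker)) := by
    rw [relIndex_eq_relIndex_map_mul_relIndex_inf_ker φ hAB, hAφ,
      Subgroup.relIndex_mul_relIndex _ _ _ (Subgroup.map_mono hAB) hψ]
  have eqψ : A.relIndex B = (A.map ψ).relIndex (B.map ψ) *
      ((A.map φ).relIndex (B.map φ) * (B.map φ).relIndex (B ⊓ ψ.ker)) := by
    rw [relIndex_eq_relIndex_map_mul_relIndex_inf_ker ψ hAB, hAψ,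
      Subgroup.relIndex_mul_relIndex _ _ _ (Subgroup.map_mono hAB) hφ]
  rw [mul_left_comm] at eqψ
  have hφ0 := left_ne_zero_of_mul (eqφ ▸ hfin)
  have hψ0 := left_ne_zero_of_mul (right_ne_zero_of_mul (eqφ ▸ hfin))
  exact mul_left_cancel₀ hψ0 (mul_left_cancel₀ hφ0 (eqφ.symm.trans eqψ))

end Herbrand

section Exponential

open NormedSpace

variable (p : ℕ) [Fact p.Prime]

theorem norm_inv_factorial_le (n : ℕ) : ‖((n.factorial : ℚ_[p])⁻¹)‖ ≤ (p : ℝ) ^ n := by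
  have hp : 1 < p := Fact.out (p := p.Prime).one_lt
  have hp1 : (1 : ℝ) ≤ p := by exact_mod_cast hp.le
  have hval : padicValNat p n.factorial ≤ n := by
    refine (Nat.le_mul_of_pos_left _ (Nat.sub_pos_of_lt hp)).trans ?_
    rw [sub_one_mul_padicValNat_factorial]
    exact Nat.sub_le _ _
  rw [norm_inv, Padic.norm_eq_zpow_neg_valuation (by exact_mod_cast n.factorial_ne_zero),
    Padic.valuation_natCast, zpow_neg, inv_inv, zpow_natCast]
  exact pow_le_pow_right₀ hp1 hval

theorem expSeries_padic_radius_pos (E : Type*) [NormedCommRing E] [NormOneClass E]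
    [NormedAlgebra ℚ_[p] E] : 0 < (expSeries ℚ_[p] E).radius := by
  have hp : (p : ℝ) ≠ 0 := by exact_mod_cast (Fact.out : p.Prime).ne_zero
  refine lt_of_lt_of_le (b := (((p : ℝ≥0)⁻¹ : ℝ≥0) : ENNReal)) (by simp) ?_
  refine (expSeries ℚ_[p] E).le_radius_of_bound 1 fun n ↦ ?_
  rw [expSeries, norm_smul, ContinuousMultilinearMap.norm_mkPiAlgebraFin, mul_one, NNReal.coe_inv,
    inv_pow]
  exact (mul_le_mul_of_nonneg_right (norm_inv_factorial_le p n) (by positivity)).trans_eq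
    (mul_inv_cancel₀ (pow_ne_zero n hp))

/-- `e` behaves like the exponential function on the disc of radius `r`: it is an injective
homomorphism to the principal units, commutes with automorphisms, and is open at `0`. -/
structure IsLocalExp (p : ℕ) [Fact p.Prime] {E : Type*} [Field E] [Algebra ℚ_[p] E]
    [FiniteDimensional ℚ_[p] E] (r : ℝ≥0) (e : E → E) : Prop where
  radius_pos : 0 < r
  map_add {x y : E} : absVal p E x ≤ r → absVal p E y ≤ r → e (x + y) = e x * e y
  injOn : Set.InjOn e {x | absVal p E x ≤ r}
  absVal_sub_one_lt {x : E} : absVal p E x ≤ r → absVal p E (e x - 1) < 1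
  map_algEquiv (g : E ≃ₐ[ℚ_[p]] E) {x : E} : absVal p E x ≤ r → g (e x) = e (g x)
  exists_unitFiltration_subset {s : ℝ≥0} : 0 < s →
    ∃ n, ∀ u ∈ unitFiltration p E n, ∃ x, absVal p E x ≤ s ∧ e x = u

theorem exists_isLocalExp (E : Type*) [Field E] [Algebra ℚ_[p] E] [FiniteDimensional ℚ_[p] E] :
    ∃ (r : ℝ≥0) (e : E → E), IsLocalExp p r e := by
  let _ := spectralNorm.nontriviallyNormedField ℚ_[p] E
  let _ : NormedAlgebra ℚ_[p] E := spectralNorm.normedAlgebra ℚ_[p] E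
  have : CompleteSpace E := spectralNorm.completeSpace ℚ_[p] E
  have radius_pos := expSeries_padic_radius_pos p E
  have deriv : HasStrictFDerivAt (exp : E → E)
      (ContinuousLinearEquiv.refl ℚ_[p] E : E →L[ℚ_[p]] E) 0 :=
    hasStrictFDerivAt_exp_zero_of_radius_pos radius_pos
  have exp_sub_one_lt : ∀ᶠ x in nhds (0 : E), ‖exp x - 1‖ < 1 := by
    have := deriv.continuousAt.eventually (Metric.ball_mem_nhds (exp 0) one_pos)
    simpa only [exp_zero, Metric.mem_ball, dist_eq_norm] using this
  obtain ⟨ε, hε, hball⟩ := Metric.eventually_nhds_iff_ball.1 ((deriv.eventually_left_inverse.and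
    (Metric.eball_mem_nhds (0 : E) radius_pos)).and exp_sub_one_lt)
  have mem_ball {x : E} (hx : absVal p E x ≤ ⟨ε / 2, by positivity⟩) : x ∈ Metric.ball 0 ε :=
    mem_ball_zero_iff.2 (lt_of_le_of_lt hx (half_lt_self hε))
  refine ⟨⟨ε / 2, by positivity⟩, exp,
    { radius_pos := half_pos hε
      map_add hx hy := exp_add_of_mem_ball (𝕂 := ℚ_[p]) (hball _ (mem_ball hx)).1.2
        (hball _ (mem_ball hy)).1.2
      injOn x hx y hy hxy := by
        rw [← (hball x (mem_ball hx)).1.1, hxy, (hball y (mem_ball hy)).1.1]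
      absVal_sub_one_lt hx := (hball _ (mem_ball hx)).2
      map_algEquiv g x hx := map_exp_of_mem_ball (𝕂 := ℚ_[p]) g
        g.toLinearMap.continuous_of_finiteDimensional x (hball x (mem_ball hx)).1.2
      exists_unitFiltration_subset {s} hs := ?_ }⟩
  have image_mem := Filter.image_mem_map (m := exp)
    (Metric.closedBall_mem_nhds (0 : E) (NNReal.coe_pos.2 hs))
  rw [deriv.map_nhds_eq_of_equiv, exp_zero] at image_mem
  obtain ⟨δ, hδ, ball_subset⟩ := Metric.mem_nhds_iff.1 image_mem
  obtain ⟨n, hn⟩ := exists_unifAbs_pow_lt p (E := E) (ε := ⟨δ, hδ.le⟩) hδ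
  refine ⟨n, fun u hu ↦ ?_⟩
  obtain ⟨x, hx, hxu⟩ := ball_subset (mem_ball_iff_norm.2 (hu.2.trans_lt hn))
  exact ⟨x, mem_closedBall_zero_iff.1 hx, hxu⟩

end Exponential

section NormalLattice

variable (p : ℕ) [Fact p.Prime] (K L : Type*) [Field K] [Algebra ℚ_[p] K]
  [FiniteDimensional ℚ_[p] K] [Field L] [Algebra K L] [FiniteDimensional K L] [IsGalois K L]

open IsGalois

/-- The elements of `L` whose coordinates in a normal basis over `K` have absolute value at most
`ε`. As a Galois module it is induced from the trivial group, hence has no cohomology. -/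
noncomputable def normalLattice (ε : ℝ≥0) : AddSubgroup L where
  carrier := {x | ∀ g, absVal p K ((normalBasis K L).repr x g) ≤ ε}
  zero_mem' := by simp
  add_mem' hx hy g := by
    rw [map_add, Finsupp.add_apply]
    exact (absVal p K).map_add_le (hx g) (hy g)
  neg_mem' hx g := by
    rw [map_neg, Finsupp.neg_apply, Valuation.map_neg]
    exact hx g

variable {K L}

theorem normalBasis_repr_algEquiv_apply (g h : L ≃ₐ[K] L) (x : L) :
    (normalBasis K L).repr (g x) h = (normalBasis K L).repr x (g⁻¹ * h) := by
  have linear_eq : ((normalBasis K L).coord h).comp g.toLinearMap =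
      (normalBasis K L).coord (g⁻¹ * h) := by
    classical
    refine (normalBasis K L).ext fun k ↦ ?_
    have apply_basis : g (normalBasis K L k) = normalBasis K L (g * k) := by
      rw [normalBasis_apply k, normalBasis_apply (g * k), AlgEquiv.mul_apply]
    simp [apply_basis, Finsupp.single_apply, eq_inv_mul_iff_mul_eq]
  exact LinearMap.congr_fun linear_eq x

theorem sum_algEquiv_repr_smul (x : L) :
    ∑ g : L ≃ₐ[K] L, g ((normalBasis K L).repr x g • normalBasis K L 1) = x := by
  simp_rw [map_smul, ← normalBasis_apply]
  exact (normalBasis K L).sum_repr x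

variable {p} {ε : ℝ≥0}

theorem algEquiv_mem_normalLattice (g : L ≃ₐ[K] L) {x : L} (hx : x ∈ normalLattice p K L ε) :
    g x ∈ normalLattice p K L ε := fun h ↦ by
  rw [normalBasis_repr_algEquiv_apply]
  exact hx _

theorem repr_smul_mem_normalLattice {x : L} (hx : x ∈ normalLattice p K L ε) (g : L ≃ₐ[K] L) :
    (normalBasis K L).repr x g • normalBasis K L 1 ∈ normalLattice p K L ε := fun h ↦ by
  classical
  rw [map_smul, Module.Basis.repr_self, Finsupp.smul_single, smul_eq_mul, mul_one,
    Finsupp.single_apply]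
  split_ifs
  · exact hx g
  · simp

theorem exists_sum_algEquiv_eq_of_fixed {x : L} (hx : x ∈ normalLattice p K L ε)
    (hfix : ∀ g : L ≃ₐ[K] L, g x = x) :
    ∃ y ∈ normalLattice p K L ε, ∑ g : L ≃ₐ[K] L, g y = x := by
  refine ⟨_, repr_smul_mem_normalLattice hx 1,
    (Finset.sum_congr rfl fun g _ ↦ ?_).trans (sum_algEquiv_repr_smul (K := K) x)⟩
  nth_rw 2 [← hfix g]
  rw [normalBasis_repr_algEquiv_apply, inv_mul_cancel]

theorem exists_algEquiv_sub_eq_of_mem_zpowers {σ g : L ≃ₐ[K] L} (hg : g ∈ Subgroup.zpowers σ)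
    {x : L} (hx : x ∈ normalLattice p K L ε) : ∃ y ∈ normalLattice p K L ε, σ y - y = g x - x := by
  obtain ⟨n, rfl⟩ := mem_powers_iff_mem_zpowers.2 hg
  induction n generalizing x with
  | zero => exact ⟨0, zero_mem _, by simp⟩
  | succ n ih =>
    obtain ⟨y, hy, hyx⟩ := ih (algEquiv_mem_normalLattice σ hx)
      (pow_mem (Subgroup.mem_zpowers σ) n)
    refine ⟨y + x, add_mem hy hx, ?_⟩
    simp only [pow_succ, AlgEquiv.mul_apply, map_add] at hyx ⊢
    linear_combination hyx

theorem exists_algEquiv_sub_eq_of_sum_eq_zero {σ : L ≃ₐ[K] L} (hσ : ∀ g, g ∈ Subgroup.zpowers σ)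
    {x : L} (hx : x ∈ normalLattice p K L ε) (hsum : ∑ g : L ≃ₐ[K] L, g x = 0) :
    ∃ y ∈ normalLattice p K L ε, σ y - y = x := by
  choose y hy hyx using fun g ↦
    exists_algEquiv_sub_eq_of_mem_zpowers (hσ g) (repr_smul_mem_normalLattice hx g)
  have sum_repr : ∑ g, (normalBasis K L).repr x g = 0 := by
    have := congrArg (fun z ↦ (normalBasis K L).repr z 1) hsum
    simp only [map_sum, Finsupp.coe_finsetSum, Finset.sum_apply, normalBasis_repr_algEquiv_apply,
      mul_one, map_zero, Finsupp.coe_zero, Pi.zero_apply] at this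
    rwa [← Equiv.sum_comp (Equiv.inv (L ≃ₐ[K] L))]
  refine ⟨∑ g, y g, sum_mem fun g _ ↦ hy g, ?_⟩
  rw [map_sum, ← Finset.sum_sub_distrib, Finset.sum_congr rfl fun g _ ↦ hyx g,
    Finset.sum_sub_distrib, sum_algEquiv_repr_smul, ← Finset.sum_smul, sum_repr, zero_smul,
    sub_zero]

variable [Algebra ℚ_[p] L] [FiniteDimensional ℚ_[p] L] [IsScalarTower ℚ_[p] K L]

variable (p) in
theorem exists_absVal_linearMap_le {E E' : Type*} [Field E] [Algebra ℚ_[p] E]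
    [FiniteDimensional ℚ_[p] E] [Field E'] [Algebra ℚ_[p] E']
    [FiniteDimensional ℚ_[p] E'] (f : E →ₗ[ℚ_[p]] E') :
    ∃ C : ℝ≥0, 0 < C ∧ ∀ x, absVal p E' (f x) ≤ C * absVal p E x := by
  let _ := spectralNorm.normedField ℚ_[p] E
  let _ := spectralNorm.normedField ℚ_[p] E'
  let _ : NormedAlgebra ℚ_[p] E := spectralNorm.normedAlgebra ℚ_[p] E
  let _ : NormedAlgebra ℚ_[p] E' := spectralNorm.normedAlgebra ℚ_[p] E'
  obtain ⟨C, hC, hf⟩ := (LinearMap.toContinuousLinearMap f).bound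
  exact ⟨⟨C, hC.le⟩, hC, hf⟩

theorem exists_forall_absVal_le_mem_normalLattice (hε : 0 < ε) :
    ∃ s > 0, ∀ x : L, absVal p L x ≤ s → x ∈ normalLattice p K L ε := by
  choose C hC hle using fun g : L ≃ₐ[K] L ↦ exists_absVal_linearMap_le p
    (((normalBasis K L).coord g).restrictScalars ℚ_[p])
  have hsum : 0 < ∑ g, C g := Finset.sum_pos (fun g _ ↦ hC g) Finset.univ_nonempty
  refine ⟨ε / ∑ g, C g, div_pos hε hsum, fun x hx g ↦ (hle g x).trans ?_⟩
  refine (mul_le_mul' (Finset.single_le_sum (fun _ _ ↦ zero_le) (Finset.mem_univ g)) hx).trans_eq ?_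
  rw [mul_div_cancel₀ _ hsum.ne']

variable (p K L) in
theorem exists_forall_mem_normalLattice_absVal_le {r : ℝ≥0} (hr : 0 < r) :
    ∃ ε > 0, ∀ x ∈ normalLattice p K L ε, absVal p L x ≤ r := by
  have hC : 0 < absVal p L (normalBasis K L 1) :=
    (absVal p L).pos_iff.2 ((normalBasis K L).ne_zero 1)
  refine ⟨r / absVal p L (normalBasis K L 1), div_pos hr hC, fun x hx ↦ ?_⟩
  rw [← sum_algEquiv_repr_smul (K := K) x]
  refine (absVal p L).map_sum_le fun g _ ↦ ?_
  rw [absVal_algEquiv, Algebra.smul_def, map_mul, absVal_algebraMap]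
  exact (mul_le_mul_left (hx g) _).trans_eq (div_mul_cancel₀ _ hC.ne')

end NormalLattice

section ExpSubgroup

variable {p : ℕ} [Fact p.Prime] {E : Type*} [Field E] [Algebra ℚ_[p] E] [FiniteDimensional ℚ_[p] E]
  {r : ℝ≥0} {e : E → E}

namespace IsLocalExp

theorem absVal_eq_one (he : IsLocalExp p r e) {x : E} (hx : absVal p E x ≤ r) :
    absVal p E (e x) = 1 := by
  simpa using (absVal p E).map_one_add_of_lt (he.absVal_sub_one_lt hx)

theorem apply_ne_zero (he : IsLocalExp p r e) {x : E} (hx : absVal p E x ≤ r) : e x ≠ 0 :=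
  (absVal p E).ne_zero_iff.1 (by rw [he.absVal_eq_one hx]; exact one_ne_zero)

theorem map_zero (he : IsLocalExp p r e) : e 0 = 1 := by
  have h0 : absVal p E 0 ≤ r := by simp
  have := he.map_add h0 h0
  rw [add_zero] at this
  exact mul_eq_left₀ (he.apply_ne_zero h0) |>.1 this.symm

theorem map_neg (he : IsLocalExp p r e) {x : E} (hx : absVal p E x ≤ r) : e (-x) = (e x)⁻¹ := by
  rw [← mul_eq_one_iff_eq_inv₀ (he.apply_ne_zero hx),
    ← he.map_add (by rwa [Valuation.map_neg]) hx, neg_add_cancel, he.map_zero]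

theorem map_sum (he : IsLocalExp p r e) {ι : Type*} (s : Finset ι) {x : ι → E}
    (hx : ∀ i, absVal p E (x i) ≤ r) : e (∑ i ∈ s, x i) = ∏ i ∈ s, e (x i) := by
  classical
  induction s using Finset.induction_on with
  | empty => exact he.map_zero
  | insert i s hi ih =>
    rw [Finset.sum_insert hi, Finset.prod_insert hi, ← ih,
      he.map_add (hx i) ((absVal p E).map_sum_le fun j _ ↦ hx j)]

/-- The image under a local exponential of an additive subgroup of its domain. -/
def expSubgroup (he : IsLocalExp p r e) {Λ : AddSubgroup E} (hΛ : ∀ x ∈ Λ, absVal p E x ≤ r) :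
    Subgroup Eˣ where
  carrier := {u | ∃ x ∈ Λ, e x = u}
  one_mem' := ⟨0, zero_mem Λ, he.map_zero⟩
  mul_mem' := by
    rintro _ _ ⟨x, hx, hxu⟩ ⟨y, hy, hyw⟩
    exact ⟨x + y, add_mem hx hy, by rw [he.map_add (hΛ x hx) (hΛ y hy), hxu, hyw, Units.val_mul]⟩
  inv_mem' := by
    rintro u ⟨x, hx, hxu⟩
    exact ⟨-x, neg_mem hx, by rw [he.map_neg (hΛ x hx), hxu, Units.val_inv_eq_inv_val]⟩

variable {Λ : AddSubgroup E} {hΛ : ∀ x ∈ Λ, absVal p E x ≤ r}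

theorem expSubgroup_le (he : IsLocalExp p r e) : he.expSubgroup hΛ ≤ unitFiltration p E 0 := by
  rintro u ⟨x, hx, hxu⟩
  exact (mem_unitFiltration_zero p).2 (hxu ▸ he.absVal_eq_one (hΛ x hx))

theorem relIndex_expSubgroup_ne_zero (he : IsLocalExp p r e) {s : ℝ≥0} (hs : 0 < s)
    (hsΛ : ∀ x, absVal p E x ≤ s → x ∈ Λ) :
    (he.expSubgroup hΛ).relIndex (unitFiltration p E 0) ≠ 0 := by
  obtain ⟨n, hn⟩ := he.exists_unitFiltration_subset hs
  refine Subgroup.relIndex_ne_zero_trans (K := unitFiltration p E n) ?_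
    (relIndex_unitFiltration_ne_zero p E n)
  rw [Subgroup.relIndex_eq_one.2]
  · exact one_ne_zero
  · intro u hu
    obtain ⟨x, hx, hxu⟩ := hn u hu
    exact ⟨x, hsΛ x hx, hxu⟩

end IsLocalExp

end ExpSubgroup

section NormOperators

/-- The norm of a finite extension `L / K` on the multiplicative groups. -/
noncomputable def unitNorm (K L : Type*) [Field K] [Field L] [Algebra K L] : Lˣ →* Kˣ :=
  Units.map (Algebra.norm K)

variable (K : Type*) {L : Type*} [Field K] [Field L] [Algebra K L]

@[simp]
theorem coe_unitNorm (u : Lˣ) : (unitNorm K L u : K) = Algebra.norm K (u : L) := rfl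

variable (L) in
/-- The inclusion `Kˣ → Lˣ` for an extension `L / K`. -/
noncomputable def unitInclusion : Kˣ →* Lˣ := Units.map (algebraMap K L)

@[simp]
theorem coe_unitInclusion (u : Kˣ) : (unitInclusion K L u : L) = algebraMap K L u := rfl

variable (L) in
theorem unitInclusion_injective : Function.Injective (unitInclusion K L) :=
  Units.map_injective (algebraMap K L).injective

variable {K} in
/-- The map `u ↦ σ u / u` attached to an automorphism `σ`. -/
noncomputable def unitTwist (σ : L ≃ₐ[K] L) : Lˣ →* Lˣ :=
  Units.map σ.toRingEquiv.toMonoidHom / MonoidHom.id Lˣ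

variable {K}

@[simp]
theorem coe_unitTwist (σ : L ≃ₐ[K] L) (u : Lˣ) : (unitTwist σ u : L) = σ u / u := by
  simp [unitTwist]

theorem mem_ker_unitTwist {σ : L ≃ₐ[K] L} {u : Lˣ} : u ∈ (unitTwist σ).ker ↔ σ (u : L) = u := by
  rw [MonoidHom.mem_ker, Units.ext_iff, coe_unitTwist, Units.val_one, div_eq_one_iff_eq u.ne_zero]

theorem unitNorm_unitTwist_self (σ : L ≃ₐ[K] L) (u : Lˣ) : unitNorm K L (unitTwist σ u) = 1 := by
  rw [unitTwist, MonoidHom.div_apply, map_div, div_eq_one]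
  exact Units.ext (Algebra.norm_eq_of_algEquiv σ (u : L))

theorem unitNorm_unitNorm (k E : Type*) [Field k] [Field E] [Algebra k E] [Algebra E L]
    [Algebra k L] [IsScalarTower k E L] (u : Lˣ) :
    unitNorm k E (unitNorm E L u) = unitNorm k L u :=
  Units.ext Algebra.norm_norm

theorem unitNorm_unitTwist {k E : Type*} [Field k] [Field E] [Algebra k E] [Algebra E L]
    {σ : E ≃ₐ[k] E} {τ : L ≃ₐ[K] L} (h : ∀ x, algebraMap E L (σ x) = τ (algebraMap E L x))
    (u : Lˣ) : unitNorm E L (unitTwist τ u) = unitTwist σ (unitNorm E L u) := by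
  have norm_apply : Algebra.norm E (τ (u : L)) = σ (Algebra.norm E (u : L)) := by
    rw [Algebra.norm_eq_of_equiv_equiv σ.toRingEquiv τ.toRingEquiv (RingHom.ext h) (u : L)]
    exact (σ.apply_symm_apply _).symm
  rw [unitTwist, MonoidHom.div_apply, map_div, unitTwist, MonoidHom.div_apply]
  exact congrArg (· / unitNorm E L u) (Units.ext norm_apply)

end NormOperators

theorem semidirectProduct_mk_pow {N G : Type*} [CommGroup N] [Group G] (φ : G →* MulAut N) (x : N)
    (σ : G) (k : ℕ) :
    (⟨x, σ⟩ : N ⋊[φ] G) ^ k = ⟨∏ j ∈ Finset.range k, φ (σ ^ j) x, σ ^ k⟩ := by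
  induction k with
  | zero => simp
  | succ k ih => rw [pow_succ, ih, SemidirectProduct.mul_def, Finset.prod_range_succ, pow_succ]

section Hilbert90

variable {K L : Type*} [Field K] [Field L] [Algebra K L] [FiniteDimensional K L] [IsGalois K L]

theorem coe_unitInclusion_unitNorm (u : Lˣ) :
    (unitInclusion K L (unitNorm K L u) : L) = ∏ g : L ≃ₐ[K] L, g u := by
  rw [coe_unitInclusion, coe_unitNorm, Algebra.norm_eq_prod_automorphisms]

/-- Mathlib's `groupCohomology.exists_div_of_norm_eq_one` is only available in `Type`. An element of
norm `1` splits `Lˣ ⋊ Gal(L/K) → Gal(L/K)`, and the splitting is a cocycle. -/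
theorem exists_unitTwist_eq_of_unitNorm_eq_one {σ : L ≃ₐ[K] L}
    (hσ : ∀ g, g ∈ Subgroup.zpowers σ) {u : Lˣ} (hu : unitNorm K L u = 1) :
    ∃ w, unitTwist σ w = u := by
  let φ := MulDistribMulAction.toMulAut (L ≃ₐ[K] L) Lˣ
  have prod_eq_one : ∏ j ∈ Finset.range (orderOf σ), φ (σ ^ j) u = 1 := by
    classical
    have hprod := coe_unitInclusion_unitNorm (K := K) u
    rw [hu, map_one, ← IsCyclic.image_range_orderOf hσ, Finset.prod_image fun i hi j hj ↦
      pow_injOn_Iio_orderOf (by simpa using hi) (by simpa using hj)] at hprod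
    exact Units.ext (by simpa [φ] using hprod.symm)
  have order_dvd : orderOf (⟨u, σ⟩ : Lˣ ⋊[φ] (L ≃ₐ[K] L)) ∣ orderOf σ := by
    rw [orderOf_dvd_iff_pow_eq_one, semidirectProduct_mk_pow, prod_eq_one, pow_orderOf_eq_one]
    rfl
  let s := monoidHomOfForallMemZpowers hσ order_dvd
  have s_generator : s σ = ⟨u, σ⟩ := monoidHomOfForallMemZpowers_apply_gen hσ order_dvd
  have s_right (g : L ≃ₐ[K] L) : (s g).right = g := by
    have : SemidirectProduct.rightHom.comp s = MonoidHom.id _ :=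
      (MonoidHom.eq_iff_eq_on_generator hσ _ _).2 (by simp [s_generator])
    exact DFunLike.congr_fun this g
  obtain ⟨w, hw⟩ := groupCohomology.isMulCoboundary₁_of_isMulCocycle₁_of_aut_to_units
    (fun g ↦ (s g).left) fun g h ↦ by
      beta_reduce
      rw [map_mul, SemidirectProduct.mul_left, s_right, mul_comm]
      rfl
  exact ⟨w, Units.ext (by simpa [s_generator] using congrArg Units.val (hw σ))⟩

theorem ker_unitNorm_eq_range_unitTwist {σ : L ≃ₐ[K] L} (hσ : ∀ g, g ∈ Subgroup.zpowers σ) :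
    (unitNorm K L).ker = (unitTwist σ).range := by
  refine le_antisymm (fun u hu ↦ exists_unitTwist_eq_of_unitNorm_eq_one hσ hu) ?_
  rintro _ ⟨w, rfl⟩
  exact unitNorm_unitTwist_self σ w

theorem ker_unitTwist_eq_range_unitInclusion {σ : L ≃ₐ[K] L} (hσ : ∀ g, g ∈ Subgroup.zpowers σ) :
    (unitTwist σ).ker = (unitInclusion K L).range := by
  ext u
  rw [mem_ker_unitTwist]
  refine ⟨fun hu ↦ ?_, ?_⟩
  · have zpowers_le : Subgroup.zpowers σ ≤ MulAction.stabilizer (L ≃ₐ[K] L) (u : L) := by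
      simpa using hu
    obtain ⟨a, ha⟩ := IsGalois.mem_bot_iff_fixed (F := K) (u : L) |>.2 fun g ↦ zpowers_le (hσ g)
    have ha0 : a ≠ 0 := by rintro rfl; exact u.ne_zero (by simpa using ha.symm)
    exact ⟨Units.mk0 a ha0, Units.ext ha⟩
  · rintro ⟨a, rfl⟩
    simp

end Hilbert90

section CyclicNorm

variable {p : ℕ} [Fact p.Prime] {K L : Type*} [Field K] [Algebra ℚ_[p] K]
  [FiniteDimensional ℚ_[p] K] [Field L] [Algebra ℚ_[p] L] [FiniteDimensional ℚ_[p] L]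
  [Algebra K L] [IsScalarTower ℚ_[p] K L]

variable (p K L) in
theorem comap_unitInclusion_unitFiltration_zero :
    (unitFiltration p L 0).comap (unitInclusion K L) = unitFiltration p K 0 := by
  ext a
  rw [Subgroup.mem_comap, mem_unitFiltration_zero, mem_unitFiltration_zero, coe_unitInclusion,
    absVal_algebraMap]

variable [FiniteDimensional K L]

variable (p K L) in
theorem comap_unitNorm_unitFiltration_zero :
    (unitFiltration p K 0).comap (unitNorm K L) = unitFiltration p L 0 := by
  ext u
  rw [Subgroup.mem_comap, mem_unitFiltration_zero, mem_unitFiltration_zero, coe_unitNorm,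
    absVal_norm, pow_eq_one_iff_of_nonneg zero_le Module.finrank_pos.ne']

variable (p K L) in
theorem ker_unitNorm_le_unitFiltration : (unitNorm K L).ker ≤ unitFiltration p L 0 := by
  rw [← comap_unitNorm_unitFiltration_zero p K L]
  exact Subgroup.ker_le_comap _ _

variable [IsGalois K L]

namespace IsLocalExp

variable {r ε : ℝ≥0} {e : L → L} {hΛ : ∀ x ∈ normalLattice p K L ε, absVal p L x ≤ r}

theorem prod_algEquiv_apply (he : IsLocalExp p r e)
    (hΛ : ∀ x ∈ normalLattice p K L ε, absVal p L x ≤ r) {x : L} (hx : x ∈ normalLattice p K L ε) :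
    ∏ g : L ≃ₐ[K] L, g (e x) = e (∑ g : L ≃ₐ[K] L, g x) := by
  rw [he.map_sum _ fun g ↦ hΛ _ (algEquiv_mem_normalLattice g hx)]
  exact Finset.prod_congr rfl fun g _ ↦ he.map_algEquiv (g.restrictScalars ℚ_[p]) (hΛ x hx)

theorem algEquiv_apply_div (he : IsLocalExp p r e)
    (hΛ : ∀ x ∈ normalLattice p K L ε, absVal p L x ≤ r) {x : L} (hx : x ∈ normalLattice p K L ε)
    (g : L ≃ₐ[K] L) : g (e x) / e x = e (g x - x) := by
  have hgx := hΛ _ (algEquiv_mem_normalLattice g hx)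
  rw [sub_eq_add_neg, he.map_add hgx (by simpa using hΛ x hx), he.map_neg (hΛ x hx), div_eq_mul_inv]
  exact congrArg (· * (e x)⁻¹) (he.map_algEquiv (g.restrictScalars ℚ_[p]) (hΛ x hx))

theorem eq_zero_of_apply_eq_one (he : IsLocalExp p r e) {x : L} (hx : absVal p L x ≤ r)
    (hex : e x = 1) : x = 0 :=
  he.injOn hx (show absVal p L 0 ≤ r by simp) (hex.trans he.map_zero.symm)

theorem expSubgroup_inf_ker_norm (he : IsLocalExp p r e) {σ : L ≃ₐ[K] L}
    (hσ : ∀ g, g ∈ Subgroup.zpowers σ) :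
    he.expSubgroup hΛ ⊓ ((unitInclusion K L).comp (unitNorm K L)).ker =
      (he.expSubgroup hΛ).map (unitTwist σ) := by
  ext u
  rw [Subgroup.mem_inf, MonoidHom.mem_ker, MonoidHom.comp_apply, Units.ext_iff,
    coe_unitInclusion_unitNorm, Units.val_one]
  refine ⟨?_, ?_⟩
  · rintro ⟨⟨x, hx, hxu⟩, hnorm⟩
    rw [← hxu, he.prod_algEquiv_apply hΛ hx] at hnorm
    obtain ⟨y, hy, rfl⟩ := exists_algEquiv_sub_eq_of_sum_eq_zero hσ hx <|
      he.eq_zero_of_apply_eq_one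
        (hΛ _ (sum_mem fun g _ ↦ algEquiv_mem_normalLattice g hx)) hnorm
    exact ⟨Units.mk0 (e y) (he.apply_ne_zero (hΛ y hy)), ⟨y, hy, rfl⟩, Units.ext <| by
      rw [coe_unitTwist, Units.val_mk0, he.algEquiv_apply_div hΛ hy, hxu]⟩
  · rintro ⟨w, ⟨y, hy, hyw⟩, rfl⟩
    have hσy := algEquiv_mem_normalLattice σ hy
    rw [coe_unitTwist, ← hyw, he.algEquiv_apply_div hΛ hy,
      he.prod_algEquiv_apply hΛ (sub_mem hσy hy)]
    refine ⟨⟨_, sub_mem hσy hy, by rw [coe_unitTwist, ← hyw, he.algEquiv_apply_div hΛ hy]⟩, ?_⟩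
    simp_rw [map_sub, Finset.sum_sub_distrib, ← AlgEquiv.mul_apply]
    rw [Fintype.sum_equiv (Equiv.mulRight σ) (fun g ↦ (g * σ) y) (fun g ↦ g y) fun _ ↦ rfl,
      sub_self, he.map_zero]

theorem expSubgroup_inf_ker_unitTwist (he : IsLocalExp p r e) {σ : L ≃ₐ[K] L}
    (hσ : ∀ g, g ∈ Subgroup.zpowers σ) :
    he.expSubgroup hΛ ⊓ (unitTwist σ).ker =
      (he.expSubgroup hΛ).map ((unitInclusion K L).comp (unitNorm K L)) := by
  ext u
  rw [Subgroup.mem_inf, ker_unitTwist_eq_range_unitInclusion hσ]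
  refine ⟨?_, ?_⟩
  · rintro ⟨⟨x, hx, hxu⟩, a, rfl⟩
    have x_fixed (g : L ≃ₐ[K] L) : g x = x :=
      he.injOn (hΛ _ (algEquiv_mem_normalLattice g hx)) (hΛ x hx) <| by
        rw [← AlgEquiv.restrictScalars_apply ℚ_[p], ← he.map_algEquiv _ (hΛ x hx), hxu]
        exact g.commutes a
    obtain ⟨y, hy, rfl⟩ := exists_sum_algEquiv_eq_of_fixed hx x_fixed
    exact ⟨Units.mk0 (e y) (he.apply_ne_zero (hΛ y hy)), ⟨y, hy, rfl⟩, Units.ext <| by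
      rw [MonoidHom.comp_apply, coe_unitInclusion_unitNorm, Units.val_mk0,
        he.prod_algEquiv_apply hΛ hy, hxu]⟩
  · rintro ⟨w, ⟨y, hy, hyw⟩, rfl⟩
    refine ⟨⟨∑ g : L ≃ₐ[K] L, g y, sum_mem fun g _ ↦ algEquiv_mem_normalLattice g hy, ?_⟩,
      unitNorm K L w, rfl⟩
    rw [MonoidHom.comp_apply, coe_unitInclusion_unitNorm, ← hyw, he.prod_algEquiv_apply hΛ hy]

end IsLocalExp

variable (p K L) in
theorem map_ord_range_unitInclusion :
    (unitInclusion K L).range.map (ord p L) =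
      Subgroup.zpowers (.ofAdd (Nat.card (inertia p K L) : ℤ)) := by
  have ord_unitInclusion (a : Kˣ) : ord p L (unitInclusion K L a) =
      Multiplicative.ofAdd (Nat.card (inertia p K L) : ℤ) ^ (ord p K a).toAdd := by
    rw [← ofAdd_zsmul, smul_eq_mul, ord_eq_ofAdd_iff, coe_unitInclusion, absVal_algebraMap,
      absVal_eq_unifAbs_zpow_ord, unifAbs_eq_pow_card_inertia p K L, mul_comm, zpow_mul,
      zpow_natCast]
  ext k
  simp_rw [Subgroup.mem_map, MonoidHom.mem_range, exists_exists_eq_and, ord_unitInclusion,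
    Subgroup.mem_zpowers_iff]
  refine ⟨fun ⟨a, ha⟩ ↦ ⟨_, ha⟩, fun ⟨n, hn⟩ ↦ ?_⟩
  obtain ⟨a, ha⟩ := ord_surjective p K (.ofAdd n)
  exact ⟨a, by rw [ha, toAdd_ofAdd, hn]⟩

variable (p K L) in
theorem index_range_unitInclusion_sup_unitFiltration :
    ((unitInclusion K L).range ⊔ unitFiltration p L 0).index = Nat.card (inertia p K L) := by
  have index_zpowers (n : ℕ) : (Subgroup.zpowers (Multiplicative.ofAdd (n : ℤ))).index = n := by
    have := AddSubgroup.index_toSubgroup (AddSubgroup.zmultiples (n : ℤ))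
    rw [Int.index_zmultiples, Int.natAbs_natCast] at this
    exact this
  rw [← ker_ord, ← index_zpowers (Nat.card (inertia p K L)), ← map_ord_range_unitInclusion,
    Subgroup.index_map, MonoidHom.range_eq_top.2 (ord_surjective p L), Subgroup.index_top, mul_one]

theorem relIndex_map_unitNorm_of_cyclic {σ : L ≃ₐ[K] L} (hσ : ∀ g, g ∈ Subgroup.zpowers σ) :
    ((unitFiltration p L 0).map (unitNorm K L)).relIndex (unitFiltration p K 0) =
      Nat.card (inertia p K L) := by
  obtain ⟨r, e, he⟩ := exists_isLocalExp p L
  obtain ⟨ε, hε, hΛ⟩ := exists_forall_mem_normalLattice_absVal_le p K L he.radius_pos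
  obtain ⟨s, hs, hsΛ⟩ := exists_forall_absVal_le_mem_normalLattice (p := p) (K := K) (L := L) hε
  have inf_ker_norm : unitFiltration p L 0 ⊓ ((unitInclusion K L).comp (unitNorm K L)).ker =
      Subgroup.map (unitTwist σ) ⊤ := by
    rw [MonoidHom.ker_comp_of_injective _ _ (unitInclusion_injective K L),
      inf_eq_right.2 (ker_unitNorm_le_unitFiltration p K L),
      ker_unitNorm_eq_range_unitTwist hσ, MonoidHom.range_eq_map]
  have inf_ker_twist : unitFiltration p L 0 ⊓ (unitTwist σ).ker =
      (unitFiltration p K 0).map (unitInclusion K L) := by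
    rw [ker_unitTwist_eq_range_unitInclusion hσ, inf_comm, ← Subgroup.map_comap_eq,
      comap_unitInclusion_unitFiltration_zero]
  have finite_index : (he.expSubgroup hΛ).relIndex (unitFiltration p L 0) ≠ 0 :=
    he.relIndex_expSubgroup_ne_zero hs hsΛ
  have herbrand := relIndex_map_inf_ker_comm he.expSubgroup_le finite_index ?_ ?_
    (he.expSubgroup_inf_ker_norm hσ) (he.expSubgroup_inf_ker_unitTwist hσ)
  · rw [inf_ker_norm, inf_ker_twist, ← Subgroup.map_map, Subgroup.relIndex_map_map_of_injective _ _
      (unitInclusion_injective K L), Subgroup.relIndex_map_map, top_sup_eq,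
      Subgroup.relIndex_top_right, ker_unitTwist_eq_range_unitInclusion hσ, sup_comm,
      index_range_unitInclusion_sup_unitFiltration] at herbrand
    exact herbrand.symm
  · rw [inf_ker_twist, ← Subgroup.map_map]
    exact Subgroup.map_mono (Subgroup.map_le_iff_le_comap.2
      (comap_unitNorm_unitFiltration_zero p K L).ge)
  · exact inf_ker_norm ▸ Subgroup.map_mono le_top

end CyclicNorm

section LocalAlgebra

variable {R S : Type*} [CommRing R] [CommRing S] [Algebra R S] [Module.Free R S]
  [Module.Finite R S] [IsLocalRing R]

attribute [local instance] Ideal.Quotient.field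

theorem norm_quotient_mk (x : S) :
    Algebra.norm (R ⧸ maximalIdeal R)
      (Ideal.Quotient.mk ((maximalIdeal R).map (algebraMap R S)) x) =
        Ideal.Quotient.mk (maximalIdeal R) (Algebra.norm R x) := by
  classical
  let b := Module.Free.chooseBasis R S
  rw [Algebra.norm_eq_matrix_det b, Algebra.norm_eq_matrix_det (basisQuotient b), RingHom.map_det]
  congr 1
  ext i j
  simp only [Algebra.leftMulMatrix_eq_repr_mul, basisQuotient_apply, ← map_mul, basisQuotient_repr,
    RingHom.mapMatrix_apply, Matrix.map_apply]

variable (S) [Finite (ResidueField R)] [((maximalIdeal R).map (algebraMap R S)).IsMaximal]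

theorem exists_trace_sub_mem_maximalIdeal (a : R) :
    ∃ x : S, Algebra.trace R S x - a ∈ maximalIdeal R := by
  have : Finite (R ⧸ maximalIdeal R) := inferInstanceAs (Finite (ResidueField R))
  have := Module.Finite.of_basis (basisQuotient (Module.Free.chooseBasis R S))
  obtain ⟨y, hy⟩ := Algebra.trace_surjective (R ⧸ maximalIdeal R)
    (S ⧸ (maximalIdeal R).map (algebraMap R S)) (Ideal.Quotient.mk _ a)
  obtain ⟨x, rfl⟩ := Ideal.Quotient.mk_surjective y
  rw [Algebra.trace_quotient_mk] at hy
  exact ⟨x, Ideal.Quotient.eq.1 hy⟩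

theorem exists_norm_sub_mem_maximalIdeal (a : R) :
    ∃ x : S, Algebra.norm R x - a ∈ maximalIdeal R := by
  have : Finite (R ⧸ maximalIdeal R) := inferInstanceAs (Finite (ResidueField R))
  have := Module.Finite.of_basis (basisQuotient (Module.Free.chooseBasis R S))
  have := Module.finite_of_finite (R ⧸ maximalIdeal R)
    (M := S ⧸ (maximalIdeal R).map (algebraMap R S))
  obtain ⟨y, hy⟩ := FiniteField.norm_surjective (R ⧸ maximalIdeal R)
    (S ⧸ (maximalIdeal R).map (algebraMap R S)) (Ideal.Quotient.mk _ a)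
  obtain ⟨x, rfl⟩ := Ideal.Quotient.mk_surjective y
  rw [norm_quotient_mk] at hy
  exact ⟨x, Ideal.Quotient.eq.1 hy⟩

theorem exists_norm_one_add_smul_sub_mem_maximalIdeal_pow {ϖ : R} (hϖ : ϖ ∈ maximalIdeal R) {n : ℕ}
    (hn : n ≠ 0) (b : R) :
    ∃ x : S, Algebra.norm R (1 + ϖ ^ n • x) - (1 + ϖ ^ n * b) ∈ maximalIdeal R ^ (n + 1) := by
  obtain ⟨x, hx⟩ := exists_trace_sub_mem_maximalIdeal S b
  obtain ⟨r, hr⟩ := Algebra.norm_one_add_smul (ϖ ^ n) x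
  have split : Algebra.norm R (1 + ϖ ^ n • x) - (1 + ϖ ^ n * b) =
      ϖ ^ n * (Algebra.trace R S x - b) + r * ϖ ^ (n * 2) := by
    rw [hr]; ring
  refine ⟨x, split ▸ ?_⟩
  exact add_mem (pow_succ (maximalIdeal R) n ▸ Ideal.mul_mem_mul (Ideal.pow_mem_pow hϖ n) hx)
    (Ideal.mul_mem_left _ _ (Ideal.pow_le_pow_right (by lia) (Ideal.pow_mem_pow hϖ (n * 2))))

end LocalAlgebra

section UnramifiedNorm

variable {p : ℕ} [Fact p.Prime] {K F : Type*} [Field K] [Algebra ℚ_[p] K]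
  [FiniteDimensional ℚ_[p] K] [Field F] [Algebra ℚ_[p] F] [FiniteDimensional ℚ_[p] F]
  [Algebra K F] [IsScalarTower ℚ_[p] K F]

theorem div_mem_unitFiltration {E : Type*} [Field E] [Algebra ℚ_[p] E] [FiniteDimensional ℚ_[p] E]
    {n : ℕ} {u w : Eˣ} (hu : u ∈ unitFiltration p E 0) (hw : w ∈ unitFiltration p E 0)
    (h : absVal p E (u - w) ≤ unifAbs p E ^ n) : u / w ∈ unitFiltration p E n := by
  refine ⟨(div_mem hu hw).1, ?_⟩
  rw [Units.val_div_eq_div_val, div_sub_one w.ne_zero, map_div₀, hw.1, div_one]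
  exact h

theorem exists_coe_pow_uniformizer_smul_eq {n : ℕ} {z : F} (hz : absVal p F z ≤ unifAbs p K ^ n) :
    ∃ x : integers p F, ((uniformizer p K ^ n • x : integers p F) : F) = z := by
  have hϖ : absVal p F (algebraMap K F (uniformizer p K) ^ n) = unifAbs p K ^ n := by
    rw [map_pow, absVal_algebraMap, unifAbs]
  have hϖ0 : algebraMap K F (uniformizer p K) ^ n ≠ 0 :=
    (absVal p F).ne_zero_iff.1 (hϖ ▸ (pow_pos (unifAbs_pos p K) n).ne')
  refine ⟨⟨z / algebraMap K F (uniformizer p K) ^ n, ?_⟩, ?_⟩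
  · rw [(absVal p F).mem_valuationSubring_iff, map_div₀, hϖ]
    exact div_le_one_of_le₀ hz zero_le
  · rw [Algebra.smul_def]
    simp [mul_div_cancel₀, hϖ0]

theorem isMaximal_map_maximalIdeal (hunram : unifAbs p K = unifAbs p F) :
    ((maximalIdeal (integers p K)).map (algebraMap (integers p K) (integers p F))).IsMaximal := by
  suffices h : (maximalIdeal (integers p K)).map (algebraMap (integers p K) (integers p F)) =
      maximalIdeal (integers p F) from h ▸ maximalIdeal.isMaximal _
  refine le_antisymm (by simpa [hunram] using maximalIdeal_map_le_pow_iff p K F (n := 1))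
    fun z hz ↦ ?_
  rw [← pow_one (maximalIdeal _), mem_maximalIdeal_pow_iff, ← hunram] at hz
  obtain ⟨x, hx⟩ := exists_coe_pow_uniformizer_smul_eq hz
  rw [← Subtype.ext hx, Algebra.smul_def, pow_one]
  exact Ideal.mul_mem_right _ _ (Ideal.mem_map_of_mem _
    ((irreducible_uniformizer p K).maximalIdeal_eq ▸ Ideal.mem_span_singleton_self _))

variable [FiniteDimensional K F]

theorem coe_norm_integers (x : integers p F) :
    (Algebra.norm (integers p K) x : K) = Algebra.norm K (x : F) := by
  have := Algebra.algebraMap_intNorm (A := integers p K) (K := K) (L := F) x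
  rwa [Algebra.intNorm_eq_norm] at this

theorem coe_unitNorm_eq_coe_norm {u : Fˣ} {x : integers p F} (hx : x = (u : F)) :
    (unitNorm K F u : K) = Algebra.norm (integers p K) x := by
  rw [coe_unitNorm, coe_norm_integers, hx]

theorem map_unitNorm_unitFiltration_le (hunram : unifAbs p K = unifAbs p F) (n : ℕ) :
    (unitFiltration p F n).map (unitNorm K F) ≤ unitFiltration p K n := by
  rintro _ ⟨u, hu, rfl⟩
  obtain ⟨x, hx⟩ := exists_coe_pow_uniformizer_smul_eq (K := K) (hunram ▸ hu.2)
  obtain ⟨r, hr⟩ := Algebra.norm_one_add_smul (uniformizer p K ^ n) x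
  have norm_sub_one : Algebra.norm (integers p K) (1 + uniformizer p K ^ n • x) - 1 =
      (Algebra.trace _ _ x + r * uniformizer p K ^ n) * uniformizer p K ^ n := by
    rw [hr]; ring
  refine ⟨by rw [coe_unitNorm, absVal_norm, hu.1, one_pow], ?_⟩
  rw [coe_unitNorm_eq_coe_norm (x := 1 + uniformizer p K ^ n • x) (by simp [hx]),
    ← OneMemClass.coe_one (integers p K), ← AddSubgroupClass.coe_sub, ← mem_maximalIdeal_pow_iff,
    norm_sub_one, (irreducible_uniformizer p K).maximalIdeal_eq]
  exact Ideal.mul_mem_left _ _ (Ideal.pow_mem_pow (Ideal.mem_span_singleton_self _) n)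

theorem exists_absVal_unitNorm_sub_lt_one (hunram : unifAbs p K = unifAbs p F) {a : Kˣ}
    (ha : a ∈ unitFiltration p K 0) :
    ∃ u ∈ unitFiltration p F 0, absVal p K (unitNorm K F u - a) < 1 := by
  have := isMaximal_map_maximalIdeal hunram
  obtain ⟨x, hx⟩ := exists_norm_sub_mem_maximalIdeal (integers p F) (⟨a, ha.1.le⟩ : integers p K)
  rw [(absVal p K).mem_maximalIdeal_iff, AddSubgroupClass.coe_sub, coe_norm_integers] at hx
  have hnorm : absVal p K (Algebra.norm K (x : F)) = 1 :=
    ((absVal p K).map_eq_of_sub_lt (ha.1.symm ▸ hx)).trans ha.1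
  have hx0 : (x : F) ≠ 0 := by
    rintro h0
    simp [h0] at hnorm
  refine ⟨Units.mk0 x hx0, ?_, hx⟩
  rw [← comap_unitNorm_unitFiltration_zero p K F, Subgroup.mem_comap, mem_unitFiltration_zero]
  exact hnorm

theorem exists_absVal_unitNorm_sub_le_pow_succ (hunram : unifAbs p K = unifAbs p F) {n : ℕ}
    (hn : n ≠ 0) {a : Kˣ} (ha : a ∈ unitFiltration p K n) :
    ∃ u ∈ unitFiltration p F n, absVal p K (unitNorm K F u - a) ≤ unifAbs p K ^ (n + 1) := by
  have := isMaximal_map_maximalIdeal hunram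
  have hϖ : uniformizer p K ∈ maximalIdeal (integers p K) :=
    (irreducible_uniformizer p K).maximalIdeal_eq ▸ Ideal.mem_span_singleton_self _
  obtain ⟨b, hb⟩ := exists_coe_pow_uniformizer_smul_eq ha.2
  obtain ⟨x, hx⟩ :=
    exists_norm_one_add_smul_sub_mem_maximalIdeal_pow (integers p F) hϖ hn b
  have hab : ((1 + uniformizer p K ^ n * b : integers p K) : K) = a := by
    rw [← add_sub_cancel (1 : K) a, ← hb]
    rfl
  rw [mem_maximalIdeal_pow_iff, AddSubgroupClass.coe_sub, coe_norm_integers, hab] at hx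
  have hsmul : absVal p F (uniformizer p K ^ n • x : integers p F) ≤ unifAbs p F ^ n := by
    rw [Algebra.smul_def, map_pow, MulMemClass.coe_mul, SubmonoidClass.coe_pow, map_mul, map_pow,
      Valuation.HasExtension.coe_algebraMap_valuationSubring_eq, absVal_algebraMap]
    exact hunram ▸ mul_le_of_le_one_right' x.2
  have hu0 : ((1 + uniformizer p K ^ n • x : integers p F) : F) ≠ 0 := by
    refine (absVal p F).ne_zero_iff.1 ?_
    rw [AddMemClass.coe_add, OneMemClass.coe_one, (absVal p F).map_one_add_of_lt
      (hsmul.trans_lt (pow_lt_one₀ zero_le (unifAbs_lt_one p F) hn))]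
    exact one_ne_zero
  exact ⟨Units.mk0 _ hu0, (mem_unitFiltration_of_ne_zero p hn).2 (by simpa using hsmul), hx⟩

theorem unitFiltration_le_map_unitNorm_sup_unitFiltration_succ
    (hunram : unifAbs p K = unifAbs p F) (n : ℕ) : unitFiltration p K n ≤
      (unitFiltration p F n).map (unitNorm K F) ⊔ unitFiltration p K (n + 1) := by
  intro a ha
  obtain ⟨u, hu, hua⟩ : ∃ u ∈ unitFiltration p F n,
      absVal p K (unitNorm K F u - a) ≤ unifAbs p K ^ (n + 1) := by
    rcases eq_or_ne n 0 with rfl | hn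
    · simpa [absVal_lt_one_iff_le_unifAbs] using exists_absVal_unitNorm_sub_lt_one hunram ha
    · exact exists_absVal_unitNorm_sub_le_pow_succ hunram hn ha
  have hNu : unitNorm K F u ∈ (unitFiltration p F n).map (unitNorm K F) := ⟨u, hu, rfl⟩
  rw [← mul_div_cancel (unitNorm K F u) a]
  refine Subgroup.mul_mem_sup hNu (div_mem_unitFiltration
    (unitFiltration_antitone p K (Nat.zero_le n) ha)
    (unitFiltration_antitone p K (Nat.zero_le n) (map_unitNorm_unitFiltration_le hunram n hNu)) ?_)
  rwa [(absVal p K).map_sub_swap]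

theorem unitFiltration_le_map_unitNorm_sup_unitFiltration
    (hunram : unifAbs p K = unifAbs p F) {n m : ℕ} (hnm : n ≤ m) : unitFiltration p K n ≤
      (unitFiltration p F n).map (unitNorm K F) ⊔ unitFiltration p K m := by
  induction m, hnm using Nat.le_induction with
  | base => exact le_sup_right
  | succ m hnm ih =>
    refine ih.trans (sup_le le_sup_left
      ((unitFiltration_le_map_unitNorm_sup_unitFiltration_succ hunram m).trans ?_))
    exact sup_le_sup_right (Subgroup.map_mono (unitFiltration_antitone p F hnm)) _

/-- Successive approximation; a sufficiently deep unit of `K` is a `[F : K]`-th power in `K`, hence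
a norm. -/
theorem map_unitNorm_unitFiltration (hunram : unifAbs p K = unifAbs p F) (n : ℕ) :
    (unitFiltration p F n).map (unitNorm K F) = unitFiltration p K n := by
  refine le_antisymm (map_unitNorm_unitFiltration_le hunram n) ?_
  obtain ⟨m, hm⟩ := exists_unitFiltration_le_map_pow p (E := K)
    (Module.finrank_pos (R := K) (M := F)).ne' n
  refine (unitFiltration_le_map_unitNorm_sup_unitFiltration hunram (le_max_left n m)).trans
    (sup_le le_rfl ((unitFiltration_antitone p K (le_max_right n m)).trans (hm.trans ?_)))
  rintro _ ⟨a, ha, rfl⟩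
  refine ⟨unitInclusion K F a, ?_, Units.ext ?_⟩
  · exact ⟨by rw [coe_unitInclusion, absVal_algebraMap, ha.1], by
      rw [coe_unitInclusion, ← map_one (algebraMap K F), ← map_sub, absVal_algebraMap, ← hunram]
      exact ha.2⟩
  · rw [coe_unitNorm, coe_unitInclusion, Algebra.norm_algebraMap, powMonoidHom_apply,
      Units.val_pow_eq_pow_val]

end UnramifiedNorm

section NormPullback

variable (p : ℕ) [Fact p.Prime]

/-- For a compositum `M = L F` over `K`: every unit of `F` whose norm to `K` is the norm of a unit
of `L` is the norm of a unit of `M`. The converse inclusion always holds. -/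
def NormPullback (K F L M : Type*) [Field K] [Field F] [Field L] [Field M] [Algebra K F]
    [Algebra K L] [Algebra F M] [Algebra ℚ_[p] L] [FiniteDimensional ℚ_[p] L] [Algebra ℚ_[p] M]
    [FiniteDimensional ℚ_[p] M] : Prop :=
  ((unitFiltration p L 0).map (unitNorm K L)).comap (unitNorm K F) ≤
    (unitFiltration p M 0).map (unitNorm F M)

section Square

variable (K F L M : Type*) [Field K] [Field F] [Field L] [Field M] [Algebra K F]
  [Algebra K L] [Algebra K M] [Algebra F M] [Algebra L M] [IsScalarTower K F M]
  [IsScalarTower K L M] [Algebra ℚ_[p] L] [FiniteDimensional ℚ_[p] L] [Algebra ℚ_[p] M]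
  [FiniteDimensional ℚ_[p] M] [IsScalarTower ℚ_[p] L M] [FiniteDimensional L M]

theorem map_unitNorm_le_comap_map_unitNorm :
    (unitFiltration p M 0).map (unitNorm F M) ≤
      ((unitFiltration p L 0).map (unitNorm K L)).comap (unitNorm K F) := by
  rintro _ ⟨y, hy, rfl⟩
  refine ⟨unitNorm L M y, ?_, ?_⟩
  · rw [← comap_unitNorm_unitFiltration_zero p L M] at hy
    exact hy
  · rw [unitNorm_unitNorm, unitNorm_unitNorm]

variable [Algebra ℚ_[p] K] [FiniteDimensional ℚ_[p] K] [Algebra ℚ_[p] F]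
  [FiniteDimensional ℚ_[p] F] [IsScalarTower ℚ_[p] K F] [IsScalarTower ℚ_[p] K L]
  [IsScalarTower ℚ_[p] F M] [FiniteDimensional K F] [FiniteDimensional K L]
  [FiniteDimensional F M] [IsGalois K L] [IsGalois F M]

theorem normPullback_of_isCyclic [IsCyclic (L ≃ₐ[K] L)] (hunram : unifAbs p K = unifAbs p F)
    (hcomp : Algebra.adjoin F (Set.range (algebraMap L M)) = ⊤) : NormPullback p K F L M := by
  have : IsCyclic (M ≃ₐ[F] M) := isCyclic_of_injective _ (galRestriction_injective K F L M hcomp)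
  obtain ⟨σ, hσ⟩ := IsCyclic.exists_generator (α := L ≃ₐ[K] L)
  obtain ⟨τ, hτ⟩ := IsCyclic.exists_generator (α := M ≃ₐ[F] M)
  have index_eq : ((unitFiltration p M 0).map (unitNorm F M)).relIndex (unitFiltration p F 0) =
      (((unitFiltration p L 0).map (unitNorm K L)).comap (unitNorm K F)).relIndex
        (unitFiltration p F 0) := by
    rw [Subgroup.relIndex_comap, map_unitNorm_unitFiltration hunram,
      relIndex_map_unitNorm_of_cyclic hσ, relIndex_map_unitNorm_of_cyclic hτ,
      (unifAbs_eq_and_card_inertia_eq K F L M p hunram hcomp).2]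
  have le_units : ((unitFiltration p L 0).map (unitNorm K L)).comap (unitNorm K F) ≤
      unitFiltration p F 0 := by
    rw [← comap_unitNorm_unitFiltration_zero p K F]
    exact Subgroup.comap_mono (Subgroup.map_le_iff_le_comap.2
      (comap_unitNorm_unitFiltration_zero p K L).ge)
  rw [← Subgroup.relIndex_mul_relIndex _ _ _ (map_unitNorm_le_comap_map_unitNorm p K F L M)
    le_units] at index_eq
  refine Subgroup.relIndex_eq_one.1 (Nat.eq_of_mul_eq_mul_right (Nat.pos_of_ne_zero ?_)
    (index_eq.trans (one_mul _).symm))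
  rw [Subgroup.relIndex_comap, map_unitNorm_unitFiltration hunram,
    relIndex_map_unitNorm_of_cyclic hσ]
  exact Nat.card_pos.ne'

end Square

section TotallyRamified

variable {K L : Type*} [Field K] [Field L] [Algebra K L] [Algebra ℚ_[p] K]
  [FiniteDimensional ℚ_[p] K] [Algebra ℚ_[p] L] [FiniteDimensional ℚ_[p] L]
  [IsScalarTower ℚ_[p] K L] [FiniteDimensional K L] [IsGalois K L]

variable {p} in
theorem range_unitNorm_sup_unitFiltration_eq_top (htot : inertia p K L = ⊤) :
    (unitNorm K L).range ⊔ unitFiltration p K 0 = ⊤ := by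
  obtain ⟨ϖ, hϖ⟩ := ord_surjective p L (.ofAdd 1)
  have hN : ord p K (unitNorm K L ϖ) = .ofAdd 1 := by
    rw [ord_eq_ofAdd_iff, zpow_one] at hϖ ⊢
    rw [coe_unitNorm, absVal_norm, hϖ, unifAbs_eq_pow_card_inertia p K L, htot,
      Subgroup.card_top, IsGalois.card_aut_eq_finrank]
  rw [← ker_ord, ← Subgroup.comap_map_eq, MonoidHom.map_range, MonoidHom.range_eq_top.2,
    Subgroup.comap_top]
  exact fun k ↦ ⟨ϖ ^ k.toAdd, by
    rw [MonoidHom.comp_apply, map_zpow, map_zpow, hN, ← ofAdd_zsmul, smul_eq_mul, mul_one]; rfl⟩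
end TotallyRamified

section Devissage

variable {p} {K F L₁ M₁ L M : Type*} [Field K] [Field F] [Field L₁] [Field M₁] [Field L] [Field M]
  [Algebra ℚ_[p] L₁] [FiniteDimensional ℚ_[p] L₁] [Algebra ℚ_[p] M₁] [FiniteDimensional ℚ_[p] M₁]
  [Algebra ℚ_[p] L] [FiniteDimensional ℚ_[p] L] [Algebra ℚ_[p] M] [FiniteDimensional ℚ_[p] M]
  [Algebra K F] [Algebra K L₁] [Algebra F M₁] [Algebra L₁ M₁] [Algebra K M₁] [Algebra L₁ L]
  [Algebra M₁ M] [Algebra K L] [Algebra F M] [IsScalarTower K F M₁] [IsScalarTower K L₁ M₁]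
  [IsScalarTower K L₁ L] [IsScalarTower F M₁ M] [IsScalarTower ℚ_[p] L₁ M₁]
  [IsScalarTower ℚ_[p] L₁ L] [FiniteDimensional K L₁] [IsGalois K L₁] [FiniteDimensional L₁ M₁]
  [FiniteDimensional L₁ L] [IsGalois L₁ L] [Algebra ℚ_[p] K] [IsScalarTower ℚ_[p] K L]

theorem unitTwist_mem_unitFiltration_zero {k E : Type*} [Field k] [Algebra ℚ_[p] k] [Field E]
    [Algebra ℚ_[p] E] [FiniteDimensional ℚ_[p] E] [Algebra k E] [IsScalarTower ℚ_[p] k E]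
    (σ : E ≃ₐ[k] E) (u : Eˣ) : unitTwist σ u ∈ unitFiltration p E 0 := by
  rw [mem_unitFiltration_zero, coe_unitTwist, map_div₀, absVal_algEquiv,
    div_self ((absVal p E).ne_zero_iff.2 u.ne_zero)]

/-- The quotient of the two partial norms is `σ z / z` by Hilbert 90. The lifts `ρ` and `τ` of `σ`
absorb the factor `z`, which is a norm from `L` up to a unit, hence up to a norm from `M₁`. -/
theorem NormPullback.trans (hbot : NormPullback p K F L₁ M₁) (htop : NormPullback p L₁ M₁ L M)
    (hunram : unifAbs p L₁ = unifAbs p M₁) (htot : inertia p L₁ L = ⊤)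
    {σ : L₁ ≃ₐ[K] L₁} (hσ : ∀ g, g ∈ Subgroup.zpowers σ)
    {τ : M₁ ≃ₐ[F] M₁} (hτ : ∀ x, algebraMap L₁ M₁ (σ x) = τ (algebraMap L₁ M₁ x))
    {ρ : L ≃ₐ[K] L} (hρ : ∀ x, algebraMap L₁ L (σ x) = ρ (algebraMap L₁ L x)) :
    NormPullback p K F L M := by
  rintro u ⟨x, hx, hxu⟩
  have hbot_mem : u ∈ (unitFiltration p M₁ 0).map (unitNorm F M₁) := by
    refine hbot ⟨unitNorm L₁ L x, ?_, by rw [unitNorm_unitNorm, hxu]⟩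
    rwa [← comap_unitNorm_unitFiltration_zero p L₁ L] at hx
  obtain ⟨y, -, rfl⟩ := hbot_mem
  have quotient_mem_ker : unitNorm L₁ M₁ y / unitNorm L₁ L x ∈ (unitNorm K L₁).ker := by
    rw [MonoidHom.mem_ker, map_div, div_eq_one, unitNorm_unitNorm, unitNorm_unitNorm, hxu,
      unitNorm_unitNorm]
  rw [ker_unitNorm_eq_range_unitTwist hσ] at quotient_mem_ker
  obtain ⟨z, hz⟩ := quotient_mem_ker
  obtain ⟨_, ⟨t, rfl⟩, z₀, hz₀, rfl⟩ :=
    Subgroup.mem_sup.1 (range_unitNorm_sup_unitFiltration_eq_top htot ▸ Subgroup.mem_top z)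
  rw [← map_unitNorm_unitFiltration hunram 0] at hz₀
  obtain ⟨s, -, rfl⟩ := hz₀
  have adjusted_mem : y / unitTwist τ s ∈ (unitFiltration p M 0).map (unitNorm M₁ M) := by
    refine htop ⟨x * unitTwist ρ t, mul_mem hx (unitTwist_mem_unitFiltration_zero ρ t), ?_⟩
    rw [map_mul, map_div, unitNorm_unitTwist hτ, unitNorm_unitTwist hρ, eq_div_iff_mul_eq',
      mul_assoc, ← map_mul, hz, mul_div_cancel]
  obtain ⟨w, hw, hwy⟩ := adjusted_mem
  exact ⟨w, hw, by
    rw [← unitNorm_unitNorm F M₁, hwy, map_div, unitNorm_unitTwist_self, div_one]⟩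

end Devissage

section UnramifiedTop

theorem map_unitNorm_unitFiltration_zero_eq {K E L : Type*} [Field K] [Field E] [Field L]
    [Algebra K E] [Algebra E L] [Algebra K L] [IsScalarTower K E L] [Algebra ℚ_[p] E]
    [FiniteDimensional ℚ_[p] E] [Algebra ℚ_[p] L] [FiniteDimensional ℚ_[p] L]
    [IsScalarTower ℚ_[p] E L] [FiniteDimensional E L] (h : unifAbs p E = unifAbs p L) :
    (unitFiltration p L 0).map (unitNorm K L) = (unitFiltration p E 0).map (unitNorm K E) := by
  rw [← map_unitNorm_unitFiltration h, Subgroup.map_map]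
  exact congrArg (Subgroup.map · _) (MonoidHom.ext fun u ↦ (unitNorm_unitNorm K E u).symm)

theorem normPullback_iff_of_unifAbs_eq (K F : Type*) {L' M' L M : Type*} [Field K] [Field F]
    [Field L'] [Field M'] [Field L] [Field M] [Algebra ℚ_[p] L'] [FiniteDimensional ℚ_[p] L']
    [Algebra ℚ_[p] M'] [FiniteDimensional ℚ_[p] M'] [Algebra ℚ_[p] L] [FiniteDimensional ℚ_[p] L]
    [Algebra ℚ_[p] M] [FiniteDimensional ℚ_[p] M] [Algebra K F] [Algebra K L'] [Algebra K L]
    [Algebra L' L] [IsScalarTower K L' L] [Algebra F M'] [Algebra F M] [Algebra M' M]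
    [IsScalarTower F M' M] [IsScalarTower ℚ_[p] L' L] [IsScalarTower ℚ_[p] M' M]
    [FiniteDimensional L' L] [FiniteDimensional M' M] (hL : unifAbs p L' = unifAbs p L)
    (hM : unifAbs p M' = unifAbs p M) : NormPullback p K F L' M' ↔ NormPullback p K F L M := by
  rw [NormPullback, NormPullback, map_unitNorm_unitFiltration_zero_eq p hL,
    map_unitNorm_unitFiltration_zero_eq p hM]

end UnramifiedTop

end NormPullback

section BaseChangeField

variable {K L : Type*} [Field K] [Field L] [Algebra K L] (F M : Type*) [Field F] [Field M]
  [Algebra F M] [Algebra L M]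

/-- The compositum inside `M` of `F` with a subextension `L'` of `L`. -/
noncomputable def baseChangeField (L' : IntermediateField K L) : IntermediateField F M :=
  IntermediateField.adjoin F (Set.range (algebraMap L' M))

variable (L' : IntermediateField K L)

noncomputable instance : Algebra L' (baseChangeField F M L') :=
  ((algebraMap L' M).codRestrict (baseChangeField F M L') fun x ↦
    IntermediateField.subset_adjoin F _ ⟨x, rfl⟩).toAlgebra

instance : IsScalarTower L' (baseChangeField F M L') M := .of_algebraMap_eq fun _ ↦ rfl

instance {k : Type*} [CommSemiring k] [Algebra k F] [Algebra k M] [IsScalarTower k F M]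
    [Algebra k L'] [IsScalarTower k L' M] :
    IsScalarTower k L' (baseChangeField F M L') :=
  .of_algebraMap_eq fun x ↦ Subtype.ext (IsScalarTower.algebraMap_apply k L' M x)

theorem adjoin_range_baseChangeField [FiniteDimensional F M] :
    Algebra.adjoin F (Set.range (algebraMap L' (baseChangeField F M L'))) = ⊤ := by
  rw [← IntermediateField.adjoin_eq_top_iff]
  apply IntermediateField.lift_injective
  rw [IntermediateField.lift_adjoin, IntermediateField.lift_top, ← Set.range_comp]
  rfl

theorem adjoin_eq_top_of_tower {k E B : Type*} [CommSemiring k] [CommSemiring E] [Semiring B]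
    [Algebra k E] [Algebra k B] [Algebra E B] [IsScalarTower k E B] {s : Set B}
    (h : Algebra.adjoin k s = ⊤) : Algebra.adjoin E s = ⊤ :=
  eq_top_iff.2 fun _ _ ↦ (Algebra.adjoin_le Algebra.subset_adjoin :
    Algebra.adjoin k s ≤ (Algebra.adjoin E s).restrictScalars k) (h ▸ Algebra.mem_top)

instance {k X : Type*} [Field k] [Algebra k K] [Algebra k L] [IsScalarTower k K L] [Semiring X]
    [Algebra L X] [Algebra k X] [IsScalarTower k L X] : IsScalarTower k L' X :=
  .of_algebraMap_eq fun x ↦ IsScalarTower.algebraMap_apply k L X x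

instance {k : Type*} [Field k] [Algebra k K] [Algebra k L] [IsScalarTower k K L]
    [FiniteDimensional k L] : FiniteDimensional k L' := .left k L' L

end BaseChangeField

section TotallyRamifiedAbelian

variable (p : ℕ) [Fact p.Prime]

theorem inertia_eq_top_of_tower {K E L : Type*} [Field K] [Field E] [Field L] [Algebra K E]
    [Algebra E L] [Algebra K L] [IsScalarTower K E L] [Algebra ℚ_[p] K] [Algebra ℚ_[p] E]
    [Algebra ℚ_[p] L] [FiniteDimensional ℚ_[p] L] [IsScalarTower ℚ_[p] K L]
    [IsScalarTower ℚ_[p] E L] (htot : inertia p K L = ⊤) : inertia p E L = ⊤ :=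
  eq_top_iff.2 fun g _ ↦ (htot ▸ Subgroup.mem_top (g.restrictScalars K) :
    g.restrictScalars K ∈ inertia p K L)

section FixedField

open IntermediateField

variable {K L : Type*} [Field K] [Field L] [Algebra K L] [IsAbelianGalois K L]

theorem map_galRestriction_fixedField_eq_bot (H : Subgroup (L ≃ₐ[K] L)) :
    H.map (galRestriction K K (fixedField H) L) = ⊥ := by
  refine (Subgroup.map_eq_bot_iff _).2 fun g hg ↦ AlgEquiv.ext fun x ↦ ?_
  exact (algebraMap (fixedField H) L).injective
    ((algebraMap_galRestriction_apply K _ L g x).trans (x.2 ⟨g, hg⟩))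

theorem map_galRestriction_fixedField_eq_top {H I : Subgroup (L ≃ₐ[K] L)} (hsup : I ⊔ H = ⊤) :
    I.map (galRestriction K K (fixedField H) L) = ⊤ := by
  rw [← sup_bot_eq (I.map _), ← map_galRestriction_fixedField_eq_bot H, ← Subgroup.map_sup, hsup,
    ← MonoidHom.range_eq_map, MonoidHom.range_eq_top]
  exact AlgEquiv.restrictNormalHom_surjective L

theorem forall_mem_zpowers_galRestriction_fixedField {H : Subgroup (L ≃ₐ[K] L)} (hH : IsCoatom H)
    {ρ : L ≃ₐ[K] L} (hρ : ρ ∉ H) (g : fixedField H ≃ₐ[K] fixedField H) :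
    g ∈ Subgroup.zpowers (galRestriction K K (fixedField H) L ρ) := by
  have sup_eq_top : Subgroup.zpowers ρ ⊔ H = ⊤ :=
    hH.2 _ (right_lt_sup.2 fun h ↦ hρ (h (Subgroup.mem_zpowers ρ)))
  rw [← MonoidHom.map_zpowers, map_galRestriction_fixedField_eq_top sup_eq_top]
  exact Subgroup.mem_top g

end FixedField

universe u

variable (K F L M : Type u) [Field K] [Field F] [Field L] [Field M] [Algebra K F]
  [Algebra K L] [Algebra K M] [Algebra F M] [Algebra L M] [IsScalarTower K F M]
  [IsScalarTower K L M] [Algebra ℚ_[p] L] [FiniteDimensional ℚ_[p] L] [Algebra ℚ_[p] M]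
  [FiniteDimensional ℚ_[p] M] [IsScalarTower ℚ_[p] L M]
  [Algebra ℚ_[p] K] [FiniteDimensional ℚ_[p] K] [Algebra ℚ_[p] F]
  [FiniteDimensional ℚ_[p] F] [IsScalarTower ℚ_[p] K F] [IsScalarTower ℚ_[p] K L]
  [IsScalarTower ℚ_[p] F M] [FiniteDimensional K F] [FiniteDimensional K L]
  [FiniteDimensional F M] [IsAbelianGalois K L] [IsAbelianGalois F M]

theorem normPullback_of_inertia_eq_top (hunram : unifAbs p K = unifAbs p F)
    (hcomp : Algebra.adjoin F (Set.range (algebraMap L M)) = ⊤) (htot : inertia p K L = ⊤) :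
    NormPullback p K F L M := by
  induction h : Module.finrank K L using Nat.strong_induction_on generalizing K F L M with
  | _ n ih =>
  subst h
  obtain hbot | ⟨H, hH, -⟩ := eq_top_or_exists_le_coatom (⊥ : Subgroup (L ≃ₐ[K] L))
  · have : Subsingleton (L ≃ₐ[K] L) :=
      Subgroup.subsingleton_iff.1 (subsingleton_of_bot_eq_top hbot)
    have : FiniteDimensional L M := .right ℚ_[p] L M
    exact normPullback_of_isCyclic p K F L M hunram hcomp
  obtain ⟨ρ, hρ⟩ : ∃ ρ, ρ ∉ H := by simpa [Subgroup.eq_top_iff'] using hH.1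
  let L₁ := IntermediateField.fixedField H
  let M₁ := baseChangeField F M L₁
  have hσ := forall_mem_zpowers_galRestriction_fixedField hH hρ
  have : IsCyclic (L₁ ≃ₐ[K] L₁) := ⟨_, hσ⟩
  have hcomp₁ : Algebra.adjoin F (Set.range (algebraMap L₁ M₁)) = ⊤ :=
    adjoin_range_baseChangeField F M L₁
  have : FiniteDimensional L₁ M₁ := .right ℚ_[p] L₁ M₁
  have : FiniteDimensional M₁ M := .right ℚ_[p] M₁ M
  have hunram₁ := (unifAbs_eq_and_card_inertia_eq K F L₁ M₁ p hunram hcomp₁).1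
  have htot₁ : inertia p L₁ L = ⊤ := inertia_eq_top_of_tower p htot
  have hσ_inertia : galRestriction K K L₁ L ρ ∈ inertia p K L₁ :=
    inertia_le_comap_galRestriction K K L₁ L p (htot ▸ Subgroup.mem_top ρ)
  rw [← map_inertia_galRestriction K F L₁ M₁ p hunram hcomp₁] at hσ_inertia
  obtain ⟨τ, -, hτ⟩ := hσ_inertia
  have finrank_lt : Module.finrank L₁ L < Module.finrank K L := by
    rw [IntermediateField.finrank_fixedField_eq_card, ← IsGalois.card_aut_eq_finrank]
    exact H.card_le_card_group.lt_of_ne (mt H.eq_top_of_card_eq hH.1)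
  exact NormPullback.trans (normPullback_of_isCyclic p K F L₁ M₁ hunram hcomp₁)
    (ih _ finrank_lt L₁ M₁ L M hunram₁ (adjoin_eq_top_of_tower hcomp) htot₁ rfl) hunram₁ htot₁ hσ
    (τ := τ) (fun x ↦ by rw [← hτ]; exact algebraMap_galRestriction_apply K L₁ M₁ τ x)
    (ρ := ρ) (algebraMap_galRestriction_apply K L₁ L ρ)

variable {K F L M} in
theorem normPullback_of_inertia_isCompl (hunram : unifAbs p K = unifAbs p F)
    (hcomp : Algebra.adjoin F (Set.range (algebraMap L M)) = ⊤) {H : Subgroup (L ≃ₐ[K] L)}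
    (hH : IsCompl (inertia p K L) H) : NormPullback p K F L M := by
  let L' := IntermediateField.fixedField H
  let M' := baseChangeField F M L'
  have inertia_eq_top : inertia p K L' = ⊤ := by
    rw [eq_top_iff, ← map_galRestriction_fixedField_eq_top hH.sup_eq_top]
    exact Subgroup.map_le_iff_le_comap.2 (inertia_le_comap_galRestriction K K L' L p)
  have inertia_eq_bot : inertia p L' L = ⊥ := by
    refine (Subgroup.eq_bot_iff_forall _).2 fun g hg ↦ AlgEquiv.restrictScalars_injective K ?_
    refine Subgroup.disjoint_def.1 hH.disjoint (x := g.restrictScalars K) hg ?_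
    rw [← IntermediateField.fixingSubgroup_fixedField H]
    exact fun x ↦ g.commutes x
  have unifAbs_eq : unifAbs p L' = unifAbs p L := by
    rw [unifAbs_eq_pow_card_inertia p L' L, inertia_eq_bot, Subgroup.card_bot, pow_one]
  have hcomp' : Algebra.adjoin F (Set.range (algebraMap L' M')) = ⊤ :=
    adjoin_range_baseChangeField F M L'
  have : FiniteDimensional L' M' := .right ℚ_[p] L' M'
  have : FiniteDimensional M' M := .right ℚ_[p] M' M
  have unifAbs_eq' : unifAbs p M' = unifAbs p M := by
    rw [← (unifAbs_eq_and_card_inertia_eq K F L M p hunram hcomp).1, ← unifAbs_eq,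
      (unifAbs_eq_and_card_inertia_eq K F L' M' p hunram hcomp').1]
  exact (normPullback_iff_of_unifAbs_eq p K F unifAbs_eq unifAbs_eq').1
    (normPullback_of_inertia_eq_top p K F L' M' hunram hcomp' inertia_eq_top)

end TotallyRamifiedAbelian

section Frobenius

variable (p : ℕ) [Fact p.Prime]

section RootsOfUnity

variable {E : Type*} [Field E] [Algebra ℚ_[p] E] [FiniteDimensional ℚ_[p] E] {N : ℕ}

theorem absVal_eq_one_of_pow_eq_one (hN : N ≠ 0) {η : E} (hη : η ^ N = 1) : absVal p E η = 1 :=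
  (pow_eq_one_iff_of_nonneg zero_le hN).1 (by rw [← map_pow, hη, map_one])

theorem eq_one_of_pow_eq_one_of_absVal_sub_one_lt_one (hN : absVal p E N = 1) {η : E}
    (hη : η ^ N = 1) (hlt : absVal p E (η - 1) < 1) : η = 1 := by
  have hN0 : N ≠ 0 := by rintro rfl; simp at hN
  by_contra hne
  have geom_sum_eq_zero : ∑ i ∈ Finset.range N, η ^ i = 0 := by
    rw [geom_sum_eq hne, hη, sub_self, zero_div]
  have card_eq : (N : E) = -∑ i ∈ Finset.range N, (η ^ i - 1) := by
    rw [Finset.sum_sub_distrib, geom_sum_eq_zero]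
    simp
  refine hN.not_lt ?_
  rw [card_eq, Valuation.map_neg]
  refine (absVal p E).map_sum_lt one_ne_zero fun i _ ↦ ?_
  rw [← mul_geom_sum, map_mul]
  exact mul_lt_one_of_lt_of_le hlt ((absVal p E).map_sum_le fun j _ ↦ by
    rw [map_pow]; exact pow_le_one₀ zero_le (absVal_eq_one_of_pow_eq_one p hN0 hη).le)

theorem eq_of_pow_eq_one_of_absVal_sub_lt_one (hN : absVal p E N = 1) {η ξ : E}
    (hη : η ^ N = 1) (hξ : ξ ^ N = 1) (hlt : absVal p E (η - ξ) < 1) : η = ξ := by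
  have hN0 : N ≠ 0 := by rintro rfl; simp at hN
  have hξ0 : ξ ≠ 0 := by rintro rfl; simp [hN0] at hξ
  refine (div_eq_one_iff_eq hξ0).1 (eq_one_of_pow_eq_one_of_absVal_sub_one_lt_one p hN ?_ ?_)
  · rw [div_pow, hη, hξ, div_one]
  · rwa [div_sub_one hξ0, map_div₀, absVal_eq_one_of_pow_eq_one p hN0 hξ, div_one]

end RootsOfUnity

variable (K L : Type*) [Field K] [Field L] [Algebra K L] [Algebra ℚ_[p] K] [Algebra ℚ_[p] L]
  [FiniteDimensional ℚ_[p] L] [IsScalarTower ℚ_[p] K L] [FiniteDimensional ℚ_[p] K]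

theorem absVal_card_residueField_pow_sub_one {n : ℕ} (hn : n ≠ 0) :
    absVal p L ((Nat.card (ResidueField (integers p K)) ^ n - 1 : ℕ) : L) = 1 := by
  let _ := Fintype.ofFinite (ResidueField (integers p K))
  have hcard : absVal p K (Nat.card (ResidueField (integers p K))) < 1 := by
    have : residue (integers p K) (Nat.card (ResidueField (integers p K))) = 0 := by
      rw [map_natCast, Nat.card_eq_fintype_card, Nat.cast_card_eq_zero]
    rw [residue_eq_zero_iff, (absVal p K).mem_maximalIdeal_iff] at this
    exact_mod_cast this
  rw [Nat.cast_pred (pow_pos Nat.card_pos n), Nat.cast_pow, Valuation.map_sub_swap]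
  refine (absVal p L).map_one_sub_of_lt ?_
  rw [map_pow, ← map_natCast (algebraMap K L), absVal_algebraMap]
  exact pow_lt_one₀ zero_le hcard hn

variable [FiniteDimensional K L] [IsGalois K L]

open scoped Pointwise in
theorem exists_frobenius : ∃ φ : L ≃ₐ[K] L, (∀ x, absVal p L x ≤ 1 →
    absVal p L (φ x - x ^ Nat.card (ResidueField (integers p K))) < 1) ∧
      inertia p K L ⊔ Subgroup.zpowers φ = ⊤ := by
  have : IsGaloisGroup (L ≃ₐ[K] L) (integers p K) (integers p L) :=
    IsGaloisGroup.of_isFractionRing _ _ _ K L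
  let _ := Fintype.ofFinite (ResidueField (integers p K))
  let ρ : MulAction.stabilizer (L ≃ₐ[K] L) (maximalIdeal (integers p L)) →*
      (ResidueField (integers p L) ≃ₐ[ResidueField (integers p K)] ResidueField (integers p L)) :=
    Ideal.Quotient.stabilizerHom _ (maximalIdeal (integers p K)) (L ≃ₐ[K] L)
  have hker : ρ.ker.map (Subgroup.subtype _) = inertia p K L := by
    rw [inertia_eq_inertia_maximalIdeal]
    exact Ideal.Quotient.map_ker_stabilizer_subtype _ _ _
  have mem_stabilizer (g : L ≃ₐ[K] L) :
      g ∈ MulAction.stabilizer (L ≃ₐ[K] L) (maximalIdeal (integers p L)) := by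
    ext x
    rw [Ideal.mem_pointwise_smul_iff_inv_smul_mem, (absVal p L).mem_maximalIdeal_iff,
      (absVal p L).mem_maximalIdeal_iff]
    exact iff_of_eq (congrArg (· < 1) (absVal_algEquiv p g⁻¹ (x : L)))
  have hsurj : Function.Surjective ρ := Ideal.Quotient.stabilizerHom_surjective _ _ _
  obtain ⟨φ, hφ⟩ := hsurj (FiniteField.frobeniusAlgEquivOfAlgebraic _ _)
  refine ⟨φ, fun x hx ↦ ?_, eq_top_iff.2 fun g _ ↦ ?_⟩
  · have hφx : residue (integers p L) (φ.1 • ⟨x, hx⟩) =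
        residue (integers p L) (⟨x, hx⟩ ^ Nat.card (ResidueField (integers p K))) := by
      rw [Nat.card_eq_fintype_card]
      exact DFunLike.congr_fun hφ (residue (integers p L) ⟨x, hx⟩)
    rwa [← sub_eq_zero, ← map_sub, residue_eq_zero_iff, (absVal p L).mem_maximalIdeal_iff] at hφx
  · obtain ⟨j, hj⟩ := (FiniteField.bijective_frobeniusAlgEquivOfAlgebraic_pow
      (ResidueField (integers p K)) (ResidueField (integers p L))).2 (ρ ⟨g, mem_stabilizer g⟩)
    have hmem : ⟨g, mem_stabilizer g⟩ * (φ ^ j.1)⁻¹ ∈ ρ.ker := by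
      rw [MonoidHom.mem_ker, map_mul, map_inv, map_pow, hφ, mul_inv_eq_one]
      exact hj.symm
    rw [← inv_mul_cancel_right g (φ.1 ^ j.1), ← hker]
    exact Subgroup.mul_mem_sup ⟨_, hmem, rfl⟩ (Subgroup.npow_mem_zpowers _ _)

end Frobenius

section Cyclotomic

open Polynomial

variable {K L Ω : Type*} [Field K] [Field L] [Field Ω] [Algebra L Ω] [Algebra K Ω]

theorem pow_eq_self_iff_dvd_sub_one {E : Type*} [Field E] {N m : ℕ} {ζ : E}
    (hζ : IsPrimitiveRoot ζ N) (hN : N ≠ 0) (hm : 0 < m) : ζ ^ m = ζ ↔ N ∣ m - 1 := by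
  rw [← hζ.pow_eq_one_iff_dvd, ← mul_eq_right₀ (hζ.ne_zero hN), ← pow_succ, Nat.sub_add_cancel hm]

theorem algEquiv_eq_of_eqOn_of_isPrimitiveRoot {N : ℕ} [NeZero N] [IsCyclotomicExtension {N} L Ω]
    {ζ : Ω} (hζ : IsPrimitiveRoot ζ N) {g h : Ω ≃ₐ[K] Ω}
    (hL : ∀ x : L, g (algebraMap L Ω x) = h (algebraMap L Ω x)) (hgh : g ζ = h ζ) : g = h := by
  ext x
  have hx : x ∈ Algebra.adjoin L {ζ} :=
    IsCyclotomicExtension.adjoin_primitive_root_eq_top (A := L) hζ ▸ Algebra.mem_top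
  induction hx using Algebra.adjoin_induction with
  | mem y hy => rwa [Set.mem_singleton_iff.1 hy]
  | algebraMap x => exact hL x
  | add y z _ _ hy hz => rw [map_add, map_add, hy, hz]
  | mul y z _ _ hy hz => rw [map_mul, map_mul, hy, hz]

variable (K L Ω) [Algebra K L] [IsScalarTower K L Ω]

variable {K L Ω} in
theorem pow_card_eq_one_of_apply_eq {N : ℕ} [NeZero N] [IsCyclotomicExtension {N} L Ω]
    [Normal K L] {ζ : Ω} (hζ : IsPrimitiveRoot ζ N) {φ : Ω ≃ₐ[K] Ω}
    (hφ : (φ ^ Nat.card (L ≃ₐ[K] L)) ζ = ζ) : φ ^ Nat.card (L ≃ₐ[K] L) = 1 := by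
  have restrict_eq_one : (φ ^ Nat.card (L ≃ₐ[K] L)).restrictNormal L = 1 := by
    change AlgEquiv.restrictNormalHom L (φ ^ Nat.card (L ≃ₐ[K] L)) = 1
    rw [map_pow, pow_card_eq_one']
  refine algEquiv_eq_of_eqOn_of_isPrimitiveRoot (L := L) hζ (fun x ↦ ?_) hφ
  rw [← AlgEquiv.restrictNormal_commutes, restrict_eq_one, AlgEquiv.one_apply, AlgEquiv.one_apply]

theorem normal_of_isCyclotomicExtension (N : ℕ) [NeZero N] [IsCyclotomicExtension {N} L Ω]
    [FiniteDimensional K L] [IsGalois K L] : Normal K Ω := by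
  obtain ⟨f, hf_separable, hf⟩ := IsGalois.is_separable_splitting_field K L
  have : ((X ^ N - 1 : K[X]).map (algebraMap K L)).IsSplittingField L Ω := by
    rw [Polynomial.map_sub, Polynomial.map_pow, map_X, Polynomial.map_one]
    exact IsCyclotomicExtension.isSplittingField_X_pow_sub_one N L Ω
  have := IsSplittingField.mul (K := L) Ω f (X ^ N - 1) hf_separable.ne_zero
    (monic_X_pow_sub_C 1 (NeZero.ne N)).ne_zero
  exact Normal.of_isSplittingField (f * (X ^ N - 1))

theorem isAbelianGalois_of_isCyclotomicExtension [CharZero K] (N : ℕ) [NeZero N]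
    [IsCyclotomicExtension {N} L Ω] [FiniteDimensional K L] [IsAbelianGalois K L] :
    IsAbelianGalois K Ω :=
  have := normal_of_isCyclotomicExtension K L Ω N
  { is_comm.comm g h := by
      have hζ := IsCyclotomicExtension.zeta_spec N L Ω
      have hcomm : (g * h).restrictNormal L = (h * g).restrictNormal L := by
        change AlgEquiv.restrictNormalHom L (g * h) = AlgEquiv.restrictNormalHom L (h * g)
        rw [map_mul, map_mul, mul_comm']
      refine algEquiv_eq_of_eqOn_of_isPrimitiveRoot (L := L) hζ (fun x ↦ ?_) ?_
      · rw [← AlgEquiv.restrictNormal_commutes, hcomm, AlgEquiv.restrictNormal_commutes]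
      · rw [AlgEquiv.mul_apply, AlgEquiv.mul_apply, ← hζ.autToPow_spec K g,
          ← hζ.autToPow_spec K h, map_pow, map_pow, ← hζ.autToPow_spec K g,
          ← hζ.autToPow_spec K h, pow_right_comm] }

end Cyclotomic

section UnramifiedCyclotomic

variable (p : ℕ) [Fact p.Prime] {K L Ω : Type*} [Field K] [Field L] [Field Ω] [Algebra K L]
  [Algebra L Ω] [Algebra K Ω] [IsScalarTower K L Ω] [Algebra ℚ_[p] K] [Algebra ℚ_[p] Ω]
  [FiniteDimensional ℚ_[p] Ω] {N : ℕ} [NeZero N] [IsCyclotomicExtension {N} L Ω]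

theorem unifAbs_eq_of_isCyclotomicExtension [Algebra ℚ_[p] L] [FiniteDimensional ℚ_[p] L]
    [IsScalarTower ℚ_[p] L Ω] (hN : absVal p Ω N = 1) : unifAbs p L = unifAbs p Ω := by
  have : FiniteDimensional L Ω := IsCyclotomicExtension.finiteDimensional {N} L Ω
  have : IsGalois L Ω := IsCyclotomicExtension.isGalois {N} L Ω
  have hζ := IsCyclotomicExtension.zeta_spec N L Ω
  have inertia_eq_bot : inertia p L Ω = ⊥ := (Subgroup.eq_bot_iff_forall _).2 fun g hg ↦
    algEquiv_eq_of_eqOn_of_isPrimitiveRoot (L := L) hζ (fun x ↦ by simp)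
      (eq_of_pow_eq_one_of_absVal_sub_lt_one p hN
        (hζ.map_of_injective g.injective).pow_eq_one hζ.pow_eq_one
        (hg _ (absVal_eq_one_of_pow_eq_one p (NeZero.ne N) hζ.pow_eq_one).le))
  rw [unifAbs_eq_pow_card_inertia p L Ω, inertia_eq_bot, Subgroup.card_bot, pow_one]

theorem frobenius_pow_apply_of_pow_eq_one {K E : Type*} [Field K] [Field E] [Algebra K E]
    [Algebra ℚ_[p] E] [FiniteDimensional ℚ_[p] E] {N q : ℕ} (hN : absVal p E N = 1)
    {φ : E ≃ₐ[K] E} (hφ : ∀ x, absVal p E x ≤ 1 → absVal p E (φ x - x ^ q) < 1) {ζ : E}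
    (hζ : ζ ^ N = 1) (j : ℕ) : (φ ^ j) ζ = ζ ^ q ^ j := by
  have hN0 : N ≠ 0 := by rintro rfl; simp at hN
  have hφζ : φ ζ = ζ ^ q := eq_of_pow_eq_one_of_absVal_sub_lt_one p hN
    (by rw [← map_pow, hζ, map_one]) (by rw [pow_right_comm, hζ, one_pow])
    (hφ ζ (absVal_eq_one_of_pow_eq_one p hN0 hζ).le)
  induction j with
  | zero => simp
  | succ j ih => rw [pow_succ', AlgEquiv.mul_apply, ih, map_pow, hφζ, ← pow_mul, ← pow_succ']

variable [FiniteDimensional ℚ_[p] K] [IsScalarTower ℚ_[p] K Ω] [FiniteDimensional K L]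
  [IsGalois K L] [FiniteDimensional K Ω] [IsGalois K Ω]

variable (L) in
/-- With this `N` a Frobenius of `Ω / K` has order exactly `Nat.card (L ≃ₐ[K] L)`, both in the
Galois group and modulo inertia, so the powers of Frobenius form the complement. -/
theorem exists_isCompl_inertia
    (hN : N = Nat.card (ResidueField (integers p K)) ^ Nat.card (L ≃ₐ[K] L) - 1) :
    ∃ H, IsCompl (inertia p K Ω) H := by
  classical
  let q := Nat.card (ResidueField (integers p K))
  have hq : 1 < q := Finite.one_lt_card
  have absVal_N : absVal p Ω N = 1 :=
    hN ▸ absVal_card_residueField_pow_sub_one p K Ω Nat.card_pos.ne'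
  obtain ⟨φ, hφ, hsup⟩ := exists_frobenius p K Ω
  have hζ := IsCyclotomicExtension.zeta_spec N L Ω
  have pow_apply_zeta_iff (j : ℕ) : (φ ^ j) (IsCyclotomicExtension.zeta N L Ω) =
      IsCyclotomicExtension.zeta N L Ω ↔ N ∣ q ^ j - 1 := by
    rw [frobenius_pow_apply_of_pow_eq_one p absVal_N hφ hζ.pow_eq_one,
      pow_eq_self_iff_dvd_sub_one hζ (NeZero.ne N) (pow_pos Nat.card_pos j)]
  have hpow : φ ^ Nat.card (L ≃ₐ[K] L) = 1 :=
    pow_card_eq_one_of_apply_eq hζ ((pow_apply_zeta_iff _).2 hN.dvd)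
  refine ⟨.zpowers φ, Subgroup.disjoint_def.2 fun {g} hgI hg ↦ ?_, codisjoint_iff.2 hsup⟩
  obtain ⟨j, hj, rfl⟩ := Finset.mem_image.1 (mem_zpowers_iff_mem_range_orderOf.1 hg)
  have hj_lt : j < Nat.card (L ≃ₐ[K] L) :=
    (Finset.mem_range.1 hj).trans_le (orderOf_le_of_pow_eq_one Nat.card_pos hpow)
  have hdvd : N ∣ q ^ j - 1 := (pow_apply_zeta_iff j).1 <|
    eq_of_pow_eq_one_of_absVal_sub_lt_one p absVal_N
      (hζ.map_of_injective (φ ^ j).injective).pow_eq_one hζ.pow_eq_one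
      (hgI _ (absVal_eq_one_of_pow_eq_one p (NeZero.ne N) hζ.pow_eq_one).le)
  have hlt : q ^ j - 1 < N :=
    hN ▸ Nat.sub_lt_sub_right (Nat.one_le_pow _ _ Nat.card_pos) (Nat.pow_lt_pow_right hq hj_lt)
  have hqj : q ^ j = 1 := by
    have := Nat.eq_zero_of_dvd_of_lt hdvd hlt
    have := Nat.one_le_pow j q Nat.card_pos
    lia
  obtain rfl : j = 0 := (Nat.pow_eq_one.1 hqj).resolve_left hq.ne'
  rfl

end UnramifiedCyclotomic

section AbelianNormPullback

theorem adjoin_range_eq_top_of_cyclotomic {F L M Ψ : Type*} [Field F] [Field L] [Field M] [Field Ψ]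
    [Algebra F M] [Algebra L M] [Algebra M Ψ] [Algebra F Ψ] [Algebra L Ψ] [IsScalarTower F M Ψ]
    [IsScalarTower L M Ψ] (hcomp : Algebra.adjoin F (Set.range (algebraMap L M)) = ⊤)
    {N : ℕ} [NeZero N] [IsCyclotomicExtension {N} M Ψ] {ζ : Ψ} (hζ : IsPrimitiveRoot ζ N)
    (Ω : IntermediateField L Ψ) (hΩ : ζ ∈ Ω) :
    Algebra.adjoin F (Set.range (algebraMap Ω Ψ)) = ⊤ := by
  have hM (x : M) : algebraMap M Ψ x ∈ Algebra.adjoin F (Set.range (algebraMap Ω Ψ)) := by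
    have hx : x ∈ Algebra.adjoin F (Set.range (algebraMap L M)) := hcomp ▸ Algebra.mem_top
    refine Algebra.adjoin_mono ?_
      ((AlgHom.map_adjoin (IsScalarTower.toAlgHom F M Ψ) _).le ⟨x, hx, rfl⟩)
    rintro _ ⟨_, ⟨y, rfl⟩, rfl⟩
    exact ⟨algebraMap L Ω y, IsScalarTower.algebraMap_apply L M Ψ y⟩
  refine eq_top_iff.2 fun x _ ↦ ?_
  have hx : x ∈ Algebra.adjoin M {ζ} :=
    IsCyclotomicExtension.adjoin_primitive_root_eq_top (A := M) hζ ▸ Algebra.mem_top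
  induction hx using Algebra.adjoin_induction with
  | mem y hy => exact Algebra.subset_adjoin ⟨⟨y, Set.mem_singleton_iff.1 hy ▸ hΩ⟩, rfl⟩
  | algebraMap x => exact hM x
  | add y z _ _ hy hz => exact add_mem (hy trivial) (hz trivial)
  | mul y z _ _ hy hz => exact mul_mem (hy trivial) (hz trivial)

universe u

variable (p : ℕ) [Fact p.Prime] {K F L M : Type u} [Field K] [Field F] [Field L] [Field M]
  [Algebra K F] [Algebra K L] [Algebra K M] [Algebra F M] [Algebra L M] [IsScalarTower K F M]
  [IsScalarTower K L M] [Algebra ℚ_[p] L] [FiniteDimensional ℚ_[p] L] [Algebra ℚ_[p] M]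
  [FiniteDimensional ℚ_[p] M] [IsScalarTower ℚ_[p] L M]
  [Algebra ℚ_[p] K] [FiniteDimensional ℚ_[p] K] [Algebra ℚ_[p] F]
  [FiniteDimensional ℚ_[p] F] [IsScalarTower ℚ_[p] K F] [IsScalarTower ℚ_[p] K L]
  [IsScalarTower ℚ_[p] F M] [FiniteDimensional K F] [FiniteDimensional K L]
  [FiniteDimensional F M] [IsAbelianGalois K L] [IsAbelianGalois F M]

theorem normPullback_of_isAbelianGalois (hunram : unifAbs p K = unifAbs p F)
    (hcomp : Algebra.adjoin F (Set.range (algebraMap L M)) = ⊤) : NormPullback p K F L M := by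
  let N := Nat.card (ResidueField (integers p K)) ^ Nat.card (L ≃ₐ[K] L) - 1
  have absVal_N (E : Type u) [Field E] [Algebra K E] [Algebra ℚ_[p] E] [FiniteDimensional ℚ_[p] E]
      [IsScalarTower ℚ_[p] K E] : absVal p E N = 1 :=
    absVal_card_residueField_pow_sub_one p K E Nat.card_pos.ne'
  have : NeZero N := ⟨fun h ↦ by simpa [h] using absVal_N K⟩
  have : CharZero K := charZero_of_injective_algebraMap (algebraMap ℚ_[p] K).injective
  have : CharZero F := charZero_of_injective_algebraMap (algebraMap ℚ_[p] F).injective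
  have : CharZero M := charZero_of_injective_algebraMap (algebraMap ℚ_[p] M).injective
  have : IsScalarTower ℚ_[p] K M := .to₁₂₄ ℚ_[p] K L M
  let Ψ := CyclotomicField N M
  have : IsScalarTower K L Ψ := .to₁₂₄ K L M Ψ
  have : IsScalarTower K F Ψ := .to₁₂₄ K F M Ψ
  have : IsScalarTower ℚ_[p] K Ψ := .to₁₂₄ ℚ_[p] K M Ψ
  have : IsScalarTower ℚ_[p] L Ψ := .to₁₂₄ ℚ_[p] L M Ψ
  have : IsScalarTower ℚ_[p] F Ψ := .to₁₂₄ ℚ_[p] F M Ψ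
  have hζ := IsCyclotomicExtension.zeta_spec N M Ψ
  have : FiniteDimensional M Ψ := IsCyclotomicExtension.finiteDimensional {N} M Ψ
  have : FiniteDimensional ℚ_[p] Ψ := .trans ℚ_[p] M Ψ
  have : FiniteDimensional L Ψ := .right ℚ_[p] L Ψ
  have : FiniteDimensional F Ψ := .right ℚ_[p] F Ψ
  have : FiniteDimensional K Ψ := .right ℚ_[p] K Ψ
  let Ω := IntermediateField.adjoin L {IsCyclotomicExtension.zeta N M Ψ}
  have : IsCyclotomicExtension {N} L Ω := hζ.intermediateField_adjoin_isCyclotomicExtension L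
  have : IsScalarTower ℚ_[p] K Ω := .to₁₂₄ ℚ_[p] K L Ω
  have : IsAbelianGalois K Ω := isAbelianGalois_of_isCyclotomicExtension K L Ω N
  have : IsAbelianGalois F Ψ := isAbelianGalois_of_isCyclotomicExtension F M Ψ N
  obtain ⟨H, hH⟩ := exists_isCompl_inertia p L (K := K) (Ω := Ω) (N := N) rfl
  have hcompΨ : Algebra.adjoin F (Set.range (algebraMap Ω Ψ)) = ⊤ :=
    adjoin_range_eq_top_of_cyclotomic hcomp hζ Ω (IntermediateField.mem_adjoin_simple_self L _)
  have hL : unifAbs p L = unifAbs p Ω := unifAbs_eq_of_isCyclotomicExtension p (absVal_N Ω)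
  have hM : unifAbs p M = unifAbs p Ψ := unifAbs_eq_of_isCyclotomicExtension p (absVal_N Ψ)
  exact (normPullback_iff_of_unifAbs_eq p K F hL hM).2
    (normPullback_of_inertia_isCompl p hunram hcompΨ hH)

end AbelianNormPullback

section Conductor

variable {p : ℕ} [Fact p.Prime]

theorem unifAbs_eq_of_normalizedVal {K F : Type*} [Field K] [Field F] [Algebra ℚ_[p] K]
    [FiniteDimensional ℚ_[p] K] [Algebra ℚ_[p] F] [FiniteDimensional ℚ_[p] F] [Algebra K F]
    [IsScalarTower ℚ_[p] K F] {vK : K → ℤ} {vF : F → ℤ} (hvK : IsNormalizedVal p K vK)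
    (hvF : IsNormalizedVal p F vF) (h : ∀ x : K, x ≠ 0 → vF (algebraMap K F x) = vK x) :
    unifAbs p K = unifAbs p F := by
  obtain ⟨π, hπ, hvπ⟩ := hvK.2.2.1
  rw [← zpow_one (unifAbs p K), ← hvπ, ← absVal_eq_unifAbs_zpow hvK hπ,
    ← absVal_algebraMap p (E' := F), absVal_eq_unifAbs_zpow hvF ((map_ne_zero _).2 hπ), h π hπ,
    hvπ, zpow_one]

theorem mem_unitFiltration_iff_normalizedVal {K : Type*} [Field K] [Algebra ℚ_[p] K]
    [FiniteDimensional ℚ_[p] K] {v : K → ℤ} (hv : IsNormalizedVal p K v) {n : ℕ} {u : Kˣ} :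
    u ∈ unitFiltration p K n ↔ v u = 0 ∧ (n = 0 ∨ (u : K) = 1 ∨ (n : ℤ) ≤ v (u - 1)) := by
  have absVal_eq_one : absVal p K u = 1 ↔ v u = 0 := by
    rw [absVal_eq_unifAbs_zpow hv u.ne_zero, ← zpow_zero (unifAbs p K),
      (unifAbs_zpow_injective p).eq_iff]
  rcases eq_or_ne n 0 with rfl | hn
  · simp [mem_unitFiltration_zero, absVal_eq_one]
  rw [mem_unitFiltration, absVal_eq_one]
  rcases eq_or_ne (u : K) 1 with hu | hu
  · simp [hu]
  · rw [absVal_eq_unifAbs_zpow hv (sub_ne_zero.2 hu), ← zpow_natCast, unifAbs_zpow_le_iff]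
    simp [hn, hu]

theorem condExp_eq_sInf {K : Type*} {L : Type v} [Field K] [Field L] [Algebra K L]
    [Algebra ℚ_[p] K] [FiniteDimensional ℚ_[p] K] [Algebra ℚ_[p] L] [FiniteDimensional ℚ_[p] L]
    [IsScalarTower ℚ_[p] K L] [FiniteDimensional K L] {vK : K → ℤ}
    (hvK : IsNormalizedVal p K vK) : condExp vK L =
      sInf {n | unitFiltration p K n ≤ (unitFiltration p L 0).map (unitNorm K L)} := by
  refine congrArg sInf (Set.ext fun n ↦ ⟨fun h u hu ↦ ?_, fun h u hu0 hvu hu ↦ ?_⟩)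
  · obtain ⟨hvu, hun⟩ := (mem_unitFiltration_iff_normalizedVal hvK).1 hu
    obtain ⟨x, hx0, hxu⟩ := h u u.ne_zero hvu hun
    have norm_eq : unitNorm K L (Units.mk0 x hx0) = u := Units.ext hxu
    refine ⟨Units.mk0 x hx0, ?_, norm_eq⟩
    rw [← comap_unitNorm_unitFiltration_zero p K L]
    exact Subgroup.mem_comap.2 (norm_eq ▸ unitFiltration_antitone p K n.zero_le hu)
  · obtain ⟨x, -, hxu⟩ := h ((mem_unitFiltration_iff_normalizedVal hvK
      (u := Units.mk0 u hu0)).2 ⟨hvu, hu⟩)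
    exact ⟨x, x.ne_zero, congrArg Units.val hxu⟩

variable {K F L M : Type v} [Field K] [Field F] [Field L] [Field M]
  [Algebra K F] [Algebra K L] [Algebra K M] [Algebra F M] [Algebra L M] [IsScalarTower K F M]
  [IsScalarTower K L M] [Algebra ℚ_[p] L] [FiniteDimensional ℚ_[p] L] [Algebra ℚ_[p] M]
  [FiniteDimensional ℚ_[p] M] [IsScalarTower ℚ_[p] L M]
  [Algebra ℚ_[p] K] [FiniteDimensional ℚ_[p] K] [Algebra ℚ_[p] F]
  [FiniteDimensional ℚ_[p] F] [IsScalarTower ℚ_[p] K F] [IsScalarTower ℚ_[p] K L]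
  [IsScalarTower ℚ_[p] F M] [FiniteDimensional K F] [FiniteDimensional K L]
  [FiniteDimensional F M] [IsAbelianGalois K L] [IsAbelianGalois F M]

theorem condExp_eq_condExp (hunram : unifAbs p K = unifAbs p F)
    (hcomp : Algebra.adjoin F (Set.range (algebraMap L M)) = ⊤) {vK : K → ℤ} {vF : F → ℤ}
    (hvK : IsNormalizedVal p K vK) (hvF : IsNormalizedVal p F vF) :
    condExp vF M = condExp vK L := by
  have : FiniteDimensional L M := .right ℚ_[p] L M
  have norm_units_eq : (unitFiltration p M 0).map (unitNorm F M) =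
      ((unitFiltration p L 0).map (unitNorm K L)).comap (unitNorm K F) :=
    (map_unitNorm_le_comap_map_unitNorm p K F L M).antisymm
      (normPullback_of_isAbelianGalois p hunram hcomp)
  rw [condExp_eq_sInf hvF, condExp_eq_sInf hvK, norm_units_eq]
  simp only [← Subgroup.map_le_iff_le_comap, map_unitNorm_unitFiltration hunram]

end Conductor

end UnramifiedBaseChange

open UnramifiedBaseChange in
/-- Let `F/K` be a finite unramified extension of `p`-adic fields and
`L/K` a finite Galois extension, with compositum `M = LF`.  Then
`m_{LF/F} = m_{L/K}` (equality of the largest upper-numbering ramification jumps); in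
particular if `L/K` is abelian then the conductor exponents satisfy
`f(LF/F) = f(L/K)`. -/
theorem unramified_base_change_jump_and_conductor
    (p : ℕ) [Fact p.Prime]
    (K F L M : Type v) [Field K] [Field F] [Field L] [Field M]
    [Algebra ℚ_[p] K] [FiniteDimensional ℚ_[p] K]
    [Algebra ℚ_[p] F] [FiniteDimensional ℚ_[p] F]
    [Algebra K F] [Algebra K L] [Algebra K M] [Algebra F M] [Algebra L M]
    [IsScalarTower ℚ_[p] K F]
    [IsScalarTower K F M] [IsScalarTower K L M]
    [FiniteDimensional K F] [FiniteDimensional K L] [FiniteDimensional K M]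
    [FiniteDimensional F M] [IsGalois K L] [IsGalois F M]
    (vK : K → ℤ) (vF : F → ℤ) (vL : L → ℤ) (vM : M → ℤ)
    (hvK : IsNormalizedVal p K vK) (hvF : IsNormalizedVal p F vF)
    (hvL : IsNormalizedVal p L vL) (hvM : IsNormalizedVal p M vM)
    -- `F/K` is unramified (ramification index 1):
    (hunram : ∀ x : K, x ≠ 0 → vF (algebraMap K F x) = vK x)
    -- compatibility of the valuations on the compositum:
    (hextL : ∃ e : ℤ, 0 < e ∧ ∀ x : L, x ≠ 0 → vM (algebraMap L M x) = e * vL x)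
    (hextF : ∃ e : ℤ, 0 < e ∧ ∀ x : F, x ≠ 0 → vM (algebraMap F M x) = e * vF x)
    -- `M = L F` :
    (hcomp : IntermediateField.adjoin K
      (Set.range (algebraMap F M) ∪ Set.range (algebraMap L M)) = ⊤)
    -- `θL` generates `O_L` over `O_K` and `θM` generates `O_M` over `O_F`:
    (θL : L) (hθLint : θL = 0 ∨ 0 ≤ vL θL)
    (hθLgen : ∀ x : L, x ≠ 0 → 0 ≤ vL x → ∃ q : Polynomial K,
      (∀ i, q.coeff i = 0 ∨ 0 ≤ vK (q.coeff i)) ∧ Polynomial.aeval θL q = x)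
    (θM : M) (hθMint : θM = 0 ∨ 0 ≤ vM θM)
    (hθMgen : ∀ x : M, x ≠ 0 → 0 ≤ vM x → ∃ q : Polynomial F,
      (∀ i, q.coeff i = 0 ∨ 0 ≤ vF (q.coeff i)) ∧ Polynomial.aeval θM q = x) :
    mJump F vM θM = mJump K vL θL ∧
    ((∀ g h : L ≃ₐ[K] L, g * h = h * g) → condExp vF M = condExp vK L) := by
  let _ : Algebra ℚ_[p] L := ((algebraMap K L).comp (algebraMap ℚ_[p] K)).toAlgebra
  let _ : Algebra ℚ_[p] M := ((algebraMap K M).comp (algebraMap ℚ_[p] K)).toAlgebra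
  have : IsScalarTower ℚ_[p] K L := .of_algebraMap_eq fun _ ↦ rfl
  have : IsScalarTower ℚ_[p] K M := .of_algebraMap_eq fun _ ↦ rfl
  have : IsScalarTower ℚ_[p] F M := .to₁₃₄ ℚ_[p] K F M
  have : IsScalarTower ℚ_[p] L M := .to₁₃₄ ℚ_[p] K L M
  have : FiniteDimensional ℚ_[p] L := .trans ℚ_[p] K L
  have : FiniteDimensional ℚ_[p] M := .trans ℚ_[p] K M
  have hunif : unifAbs p K = unifAbs p F := unifAbs_eq_of_normalizedVal hvK hvF hunram
  have hgen := algebra_adjoin_range_eq_top K F L M hcomp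
  refine ⟨mJump_eq_mJump K F L M hunif hgen
    (isIntegralGenerator_of_normalizedVal hvK hvL hθLint hθLgen)
    (isIntegralGenerator_of_normalizedVal hvF hvM hθMint hθMgen) hvL hvM, fun hab ↦ ?_⟩
  have : IsAbelianGalois K L := { is_comm.comm := hab }
  have : IsAbelianGalois F M :=
    { is_comm.comm g h := galRestriction_injective K F L M hgen (by rw [map_mul, map_mul, hab]) }
  exact condExp_eq_condExp hunif hgen hvK hvF
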